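/- arXiv:1611.03532 — 2 statements merged into one kernel-verified Lean document; each statement's English description precedes it below -/
import Mathlib

section
/- Let N ≥ 2, 0 < R₀ < R₁, p ∈ (1,∞) and s ∈ (0, R₁ − R₀). Let u be a first eigenfunction of the p-Laplacian on Ω_s. Then for every a ∈ ℝ^N \ {0} with ⟨a, e₁⟩ = 0 and every x ∈ Ω_s, u(x) = u(σ_a(x)), where σ_a(x) := x − 2(⟨a,x⟩/‖a‖²) a is the reflection in the hyperplane through the origin perpendicular to a. In particular, u(x₁, …, x_{i−1}, −x_i, x_{i+1}, …, x_N) = u(x) for every x ∈ Ω_s and every i = 2, …, N. -/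
open MeasureTheory Metric Set Filter
open scoped RealInnerProductSpace ENNReal Topology

/-- The first Dirichlet eigenvalue of the p-Laplacian on `Ω`, defined variationally as the
infimum of Rayleigh quotients of smooth, not identically zero functions with compact
support contained in `Ω`. -/
noncomputable def lam1 {N : ℕ} (p : ℝ) (Ω : Set (EuclideanSpace ℝ (Fin N))) : ℝ :=
  sInf { r : ℝ | ∃ u : EuclideanSpace ℝ (Fin N) → ℝ,
    ContDiff ℝ (⊤ : ℕ∞) u ∧ u ≠ 0 ∧ HasCompactSupport u ∧ tsupport u ⊆ Ω ∧
    r = (∫ x in Ω, ‖gradient u x‖ ^ p) / (∫ x in Ω, |u x| ^ p) }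

/-- The first standard basis vector `e₁` of `ℝ^N`. -/
noncomputable def e1 (N : ℕ) : EuclideanSpace ℝ (Fin N) :=
  (WithLp.equiv 2 (Fin N → ℝ)).symm (fun i => if (i : ℕ) = 0 then 1 else 0)

/-- The eccentric annulus `Ω_s = B_{R₁}(0) \ closure (B_{R₀}(s e₁))`. -/
noncomputable def Om (N : ℕ) (R₀ R₁ s : ℝ) : Set (EuclideanSpace ℝ (Fin N)) :=
  ball 0 R₁ \ closure (ball (s • e1 N) R₀)

/-- `u` is a first eigenfunction of the p-Laplacian on `Ω` with eigenvalue `lam`: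
C¹ on an open set containing the closure of `Ω`, positive in `Ω`, zero on `∂Ω`, and a weak
solution of `−Δ_p u = lam · u^{p−1}`. -/
def IsFirstEigenfunction {N : ℕ} (p : ℝ) (Ω : Set (EuclideanSpace ℝ (Fin N)))
    (lam : ℝ) (u : EuclideanSpace ℝ (Fin N) → ℝ) : Prop :=
  (∃ V : Set (EuclideanSpace ℝ (Fin N)), IsOpen V ∧ closure Ω ⊆ V ∧ ContDiffOn ℝ 1 u V) ∧
  (∀ x ∈ Ω, 0 < u x) ∧
  (∀ x ∈ frontier Ω, u x = 0) ∧
  (∀ φ : EuclideanSpace ℝ (Fin N) → ℝ, ContDiff ℝ (⊤ : ℕ∞) φ → HasCompactSupport φ →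
    tsupport φ ⊆ Ω →
    ∫ x in Ω, ‖gradient u x‖ ^ (p - 2) * ⟪gradient u x, gradient φ x⟫ =
      lam * ∫ x in Ω, (u x) ^ (p - 1) * φ x)

/-!
A positive eigenfunction `u` is determined up to a scalar on a connected domain. If `v` is a second
one, Picone's identity says that testing the equation of `u` with `v ^ p / u ^ (p - 1)` leaves an
energy defect `∫ B (∇ v, (v / u) • ∇ u)`, where `B ≥ 0` is the Bregman divergence of `‖·‖ ^ p`; the
two eigenvalues agree, so the defect vanishes, `∇ v = (v / u) • ∇ u` and `v / u` is constant. As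
`v ^ p / u ^ (p - 1)` need not have compact support in the domain, `v` is replaced by
`(v - δ)⁺` and `δ` tends to `0`.

The reflection `σ` preserves the annulus and the equation, so `u ∘ σ = c * u`; comparing both sides
where `u` or `u ∘ σ` is maximal gives `c = 1`. The annulus is connected because it is a union of
convex slices cut from the large ball by half-spaces missing the small one, and all slices needed
meet a connected cap of a sphere close to the large one.
-/

section Bregman

variable {E : Type*} [NormedAddCommGroup E] [InnerProductSpace ℝ E] {p : ℝ}

/-- The `p`-duality map `y ↦ ‖y‖ ^ (p - 2) • y`, i.e. `1 / p` times the gradient of `‖·‖ ^ p`.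
The `p`-Laplacian of `u` is the divergence of `pDual p (∇ u)`. -/
noncomputable def pDual (p : ℝ) (y : E) : E := ‖y‖ ^ (p - 2) • y

lemma norm_pDual (hp : 1 < p) (y : E) : ‖pDual p y‖ = ‖y‖ ^ (p - 1) := by
  rcases eq_or_ne y 0 with rfl | hy
  · simp [pDual, Real.zero_rpow (sub_pos.2 hp).ne']
  · rw [pDual, norm_smul, Real.norm_of_nonneg (by positivity),
      ← Real.rpow_add_one (norm_ne_zero_iff.2 hy)]
    ring_nf

lemma inner_pDual_self (hp : 0 < p) (y : E) : ⟪pDual p y, y⟫ = ‖y‖ ^ p := by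
  rcases eq_or_ne y 0 with rfl | hy
  · simp [Real.zero_rpow hp.ne']
  · rw [pDual, real_inner_smul_left, real_inner_self_eq_norm_sq, ← Real.rpow_natCast,
      ← Real.rpow_add (norm_pos_iff.2 hy)]
    norm_num

lemma pDual_smul (hp : 1 < p) {r : ℝ} (hr : 0 ≤ r) (y : E) :
    pDual p (r • y) = r ^ (p - 1) • pDual p y := by
  rcases hr.eq_or_lt with rfl | hr
  · simp [pDual, Real.zero_rpow (sub_pos.2 hp).ne']
  · rw [pDual, pDual, norm_smul, Real.norm_of_nonneg hr.le, Real.mul_rpow hr.le (norm_nonneg y),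
      smul_smul, smul_smul, mul_right_comm, ← Real.rpow_add_one hr.ne']
    ring_nf

lemma continuous_pDual (hp : 1 < p) : Continuous (pDual p : E → E) := by
  refine continuous_iff_continuousAt.2 fun y => ?_
  rcases eq_or_ne y 0 with rfl | hy
  · have hlim : Tendsto (fun z : E => ‖z‖ ^ (p - 1)) (𝓝 0) (𝓝 0) := by
      have h := (continuous_norm (E := E)).rpow_const (p := p - 1)
        (fun _ => Or.inr (sub_nonneg.2 hp.le)) |>.tendsto 0
      rwa [norm_zero, Real.zero_rpow (sub_pos.2 hp).ne'] at h
    rw [ContinuousAt, show pDual p (0 : E) = 0 by simp [pDual], tendsto_zero_iff_norm_tendsto_zero]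
    simpa only [norm_pDual hp] using hlim
  · exact (continuousAt_id.norm.rpow_const (Or.inl (norm_ne_zero_iff.2 hy))).smul continuousAt_id

/-- The Bregman divergence `‖X‖ ^ p - ‖Z‖ ^ p - p ⟪pDual p Z, X - Z⟫` of `‖·‖ ^ p`, with the terms
`‖Z‖ ^ p = ⟪pDual p Z, Z⟫` collected. Picone's identity expresses the energy defect of the
test function `w ^ p / u ^ (p - 1)` as the divergence of `∇ w` from `(w / u) • ∇ u`. -/
noncomputable def normPowBregman (p : ℝ) (X Z : E) : ℝ :=
  ‖X‖ ^ p - p * ⟪pDual p Z, X⟫ + (p - 1) * ‖Z‖ ^ p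

lemma continuous_normPowBregman (hp : 1 < p) :
    Continuous fun q : E × E => normPowBregman p q.1 q.2 := by
  have hp₀ : 0 ≤ p := (zero_lt_one.trans hp).le
  have := continuous_pDual (E := E) hp
  unfold normPowBregman
  fun_prop (disch := assumption)

lemma normPowBregman_self (hp : 0 < p) (X : E) : normPowBregman p X X = 0 := by
  rw [normPowBregman, inner_pDual_self hp]
  ring

lemma normPowBregman_eq_young_add_cauchySchwarz (hp : 1 < p) (X Z : E) :
    normPowBregman p X Z =
      p * (‖X‖ ^ p / p + (‖Z‖ ^ (p - 1)) ^ p.conjExponent / p.conjExponent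
        - ‖X‖ * ‖Z‖ ^ (p - 1)) + p * (‖pDual p Z‖ * ‖X‖ - ⟪pDual p Z, X⟫) := by
  have hp₁ : p - 1 ≠ 0 := (sub_pos.2 hp).ne'
  rw [normPowBregman, norm_pDual hp, ← Real.rpow_mul (norm_nonneg Z), Real.conjExponent,
    mul_div_cancel₀ _ hp₁]
  field_simp
  ring

lemma normPowBregman_nonneg (hp : 1 < p) (X Z : E) : 0 ≤ normPowBregman p X Z := by
  have hYoung := Real.young_inequality_of_nonneg (norm_nonneg X)
    (Real.rpow_nonneg (norm_nonneg Z) (p - 1)) (Real.HolderConjugate.conjExponent hp)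
  have hCS := real_inner_le_norm (pDual p Z) X
  have hp₀ : 0 ≤ p := by linarith
  rw [normPowBregman_eq_young_add_cauchySchwarz hp]
  exact add_nonneg (mul_nonneg hp₀ (sub_nonneg.2 hYoung)) (mul_nonneg hp₀ (sub_nonneg.2 hCS))

lemma eq_of_normPowBregman_eq_zero (hp : 1 < p) {X Z : E} (h : normPowBregman p X Z = 0) :
    X = Z := by
  have hp₀ : 0 < p := zero_lt_one.trans hp
  have hconj := Real.HolderConjugate.conjExponent hp
  have hZ : 0 ≤ ‖Z‖ ^ (p - 1) := by positivity
  have hYoung := Real.young_inequality_of_nonneg (norm_nonneg X) hZ hconj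
  have hCS := real_inner_le_norm (pDual p Z) X
  rw [normPowBregman_eq_young_add_cauchySchwarz hp] at h
  obtain ⟨h₁, h₂⟩ := (add_eq_zero_iff_of_nonneg (mul_nonneg hp₀.le (sub_nonneg.2 hYoung))
    (mul_nonneg hp₀.le (sub_nonneg.2 hCS))).1 h
  have hnorm : ‖X‖ = ‖Z‖ := by
    have hpow := (Real.young_inequality_eq_iff_of_nonneg (norm_nonneg X) hZ hconj).1
      (sub_eq_zero.1 ((mul_eq_zero.1 h₁).resolve_left hp₀.ne')).symm
    rw [← Real.rpow_mul (norm_nonneg Z), Real.conjExponent,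
      mul_div_cancel₀ _ (sub_pos.2 hp).ne'] at hpow
    exact (Real.rpow_left_inj (norm_nonneg X) (norm_nonneg Z) hp₀.ne').1 hpow
  rcases eq_or_ne Z 0 with rfl | hZ₀
  · simpa using hnorm
  have hinner : ⟪Z, X⟫ = ‖Z‖ * ‖X‖ := by
    have hscale : ‖Z‖ ^ (p - 2) ≠ 0 := by positivity
    have h₃ := sub_eq_zero.1 ((mul_eq_zero.1 h₂).resolve_left hp₀.ne')
    rw [pDual, norm_smul, Real.norm_of_nonneg (by positivity), real_inner_smul_left,
      mul_assoc] at h₃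
    exact (mul_left_cancel₀ hscale h₃).symm
  have hsmul := inner_eq_norm_mul_iff_real.1 hinner
  rw [hnorm] at hsmul
  exact (smul_right_injective E (norm_ne_zero_iff.2 hZ₀) hsmul).symm

lemma normPowBregman_smul_le (hp : 1 < p) (X : E) {θ : ℝ} (hθ₀ : 0 ≤ θ) (hθ₁ : θ ≤ 1) :
    normPowBregman p X (θ • X) ≤ p * ‖X‖ ^ p := by
  have hp₀ : 0 < p := zero_lt_one.trans hp
  have hθp : θ ^ p ≤ 1 := Real.rpow_le_one hθ₀ hθ₁ hp₀.le
  rw [normPowBregman, pDual_smul hp hθ₀, real_inner_smul_left, inner_pDual_self hp₀, norm_smul,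
    Real.norm_of_nonneg hθ₀, Real.mul_rpow hθ₀ (norm_nonneg X)]
  have h₁ : 0 ≤ p * (θ ^ (p - 1) * ‖X‖ ^ p) := by positivity
  have h₂ : (p - 1) * (θ ^ p * ‖X‖ ^ p) ≤ (p - 1) * (1 * ‖X‖ ^ p) := by gcongr
  linarith

end Bregman

lemma hasDerivAt_max_zero_rpow {p : ℝ} (hp : 1 < p) (t : ℝ) :
    HasDerivAt (fun t : ℝ => (max t 0) ^ p) (p * (max t 0) ^ (p - 1)) t := by
  have hp₀ : p ≠ 0 := (zero_lt_one.trans hp).ne'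
  have hleft : HasDerivWithinAt (fun t : ℝ => (max t 0) ^ p) 0 (Iic 0) (min t 0) :=
    (hasDerivWithinAt_const _ _ (0 : ℝ)).congr_of_mem
      (fun x hx => by rw [max_eq_right hx, Real.zero_rpow hp₀]) (min_le_right t 0)
  have hright (s : ℝ) (hs : 0 ≤ s) :
      HasDerivWithinAt (fun t : ℝ => (max t 0) ^ p) (p * s ^ (p - 1)) (Ici 0) s :=
    (Real.hasDerivAt_rpow_const (Or.inr hp.le)).hasDerivWithinAt.congr_of_mem
      (fun x hx => by rw [max_eq_left hx]) hs
  rcases lt_trichotomy t 0 with ht | rfl | ht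
  · rw [min_eq_left ht.le] at hleft
    rw [max_eq_right ht.le, Real.zero_rpow (sub_pos.2 hp).ne', mul_zero]
    exact hleft.hasDerivAt (Iic_mem_nhds ht)
  · have h₀ := hright 0 le_rfl
    rw [Real.zero_rpow (sub_pos.2 hp).ne', mul_zero] at h₀
    rw [max_self, Real.zero_rpow (sub_pos.2 hp).ne', mul_zero, ← hasDerivWithinAt_univ,
      ← Iic_union_Ici (a := (0 : ℝ))]
    exact HasDerivWithinAt.union (by simpa using hleft) h₀
  · rw [max_eq_left ht.le]
    exact (hright t ht.le).hasDerivAt (Ici_mem_nhds ht)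

lemma contDiff_max_zero_rpow {p : ℝ} (hp : 1 < p) :
    ContDiff ℝ 1 fun t : ℝ => (max t 0) ^ p := by
  refine contDiff_one_iff_deriv.2
    ⟨fun t => (hasDerivAt_max_zero_rpow hp t).differentiableAt, ?_⟩
  rw [funext fun t => (hasDerivAt_max_zero_rpow hp t).deriv]
  exact continuous_const.mul
    ((continuous_id.max continuous_const).rpow_const fun _ => Or.inr (sub_nonneg.2 hp.le))

lemma ae_eq_zero_of_tendsto_integral_zero {α ι : Type*} [MeasurableSpace α] {μ : Measure α}
    {l : Filter ι} [l.NeBot] [l.IsCountablyGenerated] {F : ι → α → ℝ} {f : α → ℝ}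
    (hF : ∀ i, 0 ≤ᵐ[μ] F i) (hint : ∀ i, Integrable (F i) μ)
    (hlim : Tendsto (fun i => ∫ x, F i x ∂μ) l (𝓝 0))
    (hFf : ∀ᵐ x ∂μ, Tendsto (fun i => F i x) l (𝓝 (f x))) : f =ᵐ[μ] 0 := by
  have hL1 : Tendsto (fun i => eLpNorm (F i - 0) 1 μ) l (𝓝 0) := by
    have hnorm (i : ι) : eLpNorm (F i - 0) 1 μ = ENNReal.ofReal (∫ x, F i x ∂μ) := by
      rw [sub_zero, eLpNorm_one_eq_lintegral_enorm, ← ofReal_integral_norm_eq_lintegral_enorm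
        (hint i)]
      congr 1
      exact integral_congr_ae ((hF i).mono fun x hx => Real.norm_of_nonneg hx)
    simpa only [hnorm, ENNReal.ofReal_zero] using ENNReal.tendsto_ofReal hlim
  obtain ⟨n, hn, hn₀⟩ := (tendstoInMeasure_of_tendsto_eLpNorm one_ne_zero
    (fun i => (hint i).aestronglyMeasurable) aestronglyMeasurable_zero hL1).exists_seq_tendsto_ae'
  filter_upwards [hFf, hn₀] with x hx hx₀
  exact tendsto_nhds_unique (hx.comp hn) hx₀

section Mollification

variable {E F : Type*} [NormedAddCommGroup E] [NormedSpace ℝ E] [FiniteDimensional ℝ E]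
  [NormedAddCommGroup F] [NormedSpace ℝ F] [CompleteSpace F]

lemma tendstoUniformly_normed_convolution [MeasurableSpace E] [BorelSpace E]
    {μ : Measure E} [μ.IsAddHaarMeasure] {ι : Type*} {l : Filter ι}
    {ρ : ι → ContDiffBump (0 : E)} (hρ : Tendsto (fun i => (ρ i).rOut) l (𝓝 0))
    {g : E → F} (hg : UniformContinuous g) :
    TendstoUniformly
      (fun i => convolution ((ρ i).normed μ) g (ContinuousLinearMap.lsmul ℝ ℝ) μ) g l := by
  refine Metric.tendstoUniformly_iff.2 fun ε hε => ?_
  obtain ⟨δ, hδ, hgδ⟩ := Metric.uniformContinuous_iff.1 hg (ε / 2) (half_pos hε)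
  filter_upwards [hρ.eventually_lt_const hδ] with i hi x
  rw [dist_comm]
  refine ((ρ i).dist_normed_convolution_le hg.continuous.aestronglyMeasurable
    fun y hy => ?_).trans_lt (half_lt_self hε)
  exact (hgδ ((mem_ball.1 hy).trans hi)).le

lemma exists_contDiff_seq_tendstoUniformly {Ω : Set E} (hΩ : IsOpen Ω) {φ : E → F}
    (hφ : ContDiff ℝ 1 φ) (hc : HasCompactSupport φ) (hφΩ : tsupport φ ⊆ Ω) :
    ∃ K, IsCompact K ∧ K ⊆ Ω ∧ ∃ ψ : ℕ → E → F, (∀ n, ContDiff ℝ (⊤ : ℕ∞) (ψ n)) ∧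
      (∀ n, tsupport (ψ n) ⊆ K) ∧ TendstoUniformly ψ φ atTop ∧
      TendstoUniformly (fun n => fderiv ℝ (ψ n)) (fderiv ℝ φ) atTop := by
  borelize E
  obtain ⟨d, hd, hdΩ⟩ := hc.isCompact.exists_cthickening_subset_open hΩ hφΩ
  let μ : Measure E := Measure.addHaar
  let r (n : ℕ) : ℝ := d / (n + 1)
  have hr (n : ℕ) : 0 < r n := div_pos hd n.cast_add_one_pos
  let ρ (n : ℕ) : ContDiffBump (0 : E) := ⟨r n / 2, r n, half_pos (hr n), half_lt_self (hr n)⟩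
  have hρ : Tendsto (fun n => (ρ n).rOut) atTop (𝓝 0) := by
    simpa [ρ, r, div_eq_mul_inv] using
      (tendsto_one_div_add_atTop_nhds_zero_nat (𝕜 := ℝ)).const_mul d
  let ψ (n : ℕ) : E → F :=
    convolution ((ρ n).normed μ) φ (ContinuousLinearMap.lsmul ℝ ℝ) μ
  have hfderiv (n : ℕ) : fderiv ℝ (ψ n) = convolution ((ρ n).normed μ) (fderiv ℝ φ)
      (ContinuousLinearMap.lsmul ℝ ℝ) μ := funext fun x =>
    (hc.hasFDerivAt_convolution_right (ContinuousLinearMap.lsmul ℝ ℝ)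
      (ρ n).continuous_normed.locallyIntegrable hφ x).fderiv
  refine ⟨cthickening d (tsupport φ), hc.isCompact.cthickening, hdΩ, ψ, fun n => ?_, fun n => ?_,
    tendstoUniformly_normed_convolution hρ (hc.uniformContinuous_of_continuous hφ.continuous), ?_⟩
  · exact (ρ n).hasCompactSupport_normed.contDiff_convolution_left _ (ρ n).contDiff_normed
      hφ.continuous.locallyIntegrable
  · refine closure_minimal ((support_convolution_subset _).trans ?_) isClosed_cthickening
    rintro _ ⟨a, ha, b, hb, rfl⟩
    rw [(ρ n).support_normed_eq, mem_ball_zero_iff] at ha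
    refine mem_cthickening_of_dist_le (a + b) b d _ (subset_tsupport _ hb) ?_
    rw [dist_eq_norm, add_sub_cancel_right]
    exact ha.le.trans (div_le_self hd.le (by simp))
  · simpa only [hfderiv] using tendstoUniformly_normed_convolution hρ
      ((hc.fderiv ℝ).uniformContinuous_of_continuous (hφ.continuous_fderiv one_ne_zero))

end Mollification

section Gradient

variable {E : Type*} [NormedAddCommGroup E] [InnerProductSpace ℝ E] [CompleteSpace E]

lemma continuous_gradient {φ : E → ℝ} (hφ : ContDiff ℝ 1 φ) : Continuous (gradient φ) :=
  (InnerProductSpace.toDual ℝ E).symm.continuous.comp (hφ.continuous_fderiv one_ne_zero)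

lemma continuousOn_gradient {φ : E → ℝ} {Ω : Set E} (hΩ : IsOpen Ω) (hφ : ContDiffOn ℝ 1 φ Ω) :
    ContinuousOn (gradient φ) Ω :=
  (InnerProductSpace.toDual ℝ E).symm.continuous.comp_continuousOn
    (hφ.continuousOn_fderiv_of_isOpen hΩ le_rfl)

lemma gradient_eq_of_eventuallyEq {φ ψ : E → ℝ} {x : E} (h : φ =ᶠ[𝓝 x] ψ) :
    gradient φ x = gradient ψ x := by
  rw [gradient, gradient, h.fderiv_eq]

lemma gradient_eq_zero_of_notMem_tsupport {φ : E → ℝ} {x : E} (hx : x ∉ tsupport φ) :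
    gradient φ x = 0 := by
  rw [gradient, fderiv_of_notMem_tsupport ℝ hx, map_zero]

end Gradient

section WeakForm

lemma contDiff_indicator {E F : Type*} [NormedAddCommGroup E] [NormedSpace ℝ E]
    [NormedAddCommGroup F] [NormedSpace ℝ F] {n : WithTop ℕ∞} {Ω K : Set E}
    (hΩ : IsOpen Ω) (hK : IsClosed K) (hKΩ : K ⊆ Ω) {φ : E → F}
    (hφ : ContDiffOn ℝ n φ Ω) (hφK : ∀ x ∈ Ω \ K, φ x = 0) : ContDiff ℝ n (Ω.indicator φ) := by
  refine contDiff_iff_contDiffAt.2 fun x => ?_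
  by_cases hx : x ∈ Ω
  · exact (hφ.contDiffAt (hΩ.mem_nhds hx)).congr_of_eventuallyEq
      (eqOn_indicator.eventuallyEq_of_mem (hΩ.mem_nhds hx))
  · refine contDiffAt_const (c := 0) |>.congr_of_eventuallyEq ?_
    filter_upwards [hK.isOpen_compl.mem_nhds fun h => hx (hKΩ h)] with y hy
    exact indicator_apply_eq_zero.2 fun hyΩ => hφK y ⟨hyΩ, hy⟩

variable {E H : Type*} [NormedAddCommGroup E] [InnerProductSpace ℝ E] [FiniteDimensional ℝ E]
  [MeasurableSpace E] [BorelSpace E] {μ : Measure E}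
  [NormedAddCommGroup H] [InnerProductSpace ℝ H]

/-- The equation `-div G = f` on `Ω` in the weak sense, tested against smooth compactly supported
functions and integrated against `μ`. -/
def HasWeakNegDiv (Ω : Set E) (μ : Measure E) (G : E → E) (f : E → ℝ) : Prop :=
  ∀ φ : E → ℝ, ContDiff ℝ (⊤ : ℕ∞) φ → HasCompactSupport φ → tsupport φ ⊆ Ω →
    ∫ x in Ω, ⟪G x, gradient φ x⟫ ∂μ = ∫ x in Ω, f x * φ x ∂μ

lemma tendsto_setIntegral_inner_of_tendstoUniformly {Ω K : Set E} (hΩ : MeasurableSet Ω)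
    (hK : IsCompact K) (hKΩ : K ⊆ Ω) {G : E → H} (hG : IntegrableOn G K μ) {ψ : ℕ → E → H}
    {φ : E → H} (hψ : ∀ n, Continuous (ψ n)) (hψK : ∀ n, ∀ x ∉ K, ψ n x = 0)
    (hlim : TendstoUniformly ψ φ atTop) :
    Tendsto (fun n => ∫ x in Ω, ⟪G x, ψ n x⟫ ∂μ) atTop (𝓝 (∫ x in Ω, ⟪G x, φ x⟫ ∂μ)) := by
  have hφK (x : E) (hx : x ∉ K) : φ x = 0 := by
    refine tendsto_nhds_unique (hlim.tendsto_at x) ?_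
    simpa only [hψK _ x hx] using tendsto_const_nhds
  have hrestrict {g : E → H} (hg : ∀ x ∉ K, g x = 0) :
      ∫ x in Ω, ⟪G x, g x⟫ ∂μ = ∫ x in K, ⟪G x, g x⟫ ∂μ :=
    setIntegral_eq_of_subset_of_forall_sdiff_eq_zero hΩ hKΩ fun x hx => by
      rw [hg x hx.2, inner_zero_right]
  obtain ⟨C, hC⟩ := hK.exists_bound_of_continuousOn
    (hlim.continuous (Frequently.of_forall hψ)).continuousOn
  simp only [hrestrict hφK, fun n => hrestrict (hψK n)]
  refine tendsto_integral_filter_of_dominated_convergence (fun x => ‖G x‖ * (C + 1)) ?_ ?_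
    (hG.norm.mul_const _) ?_
  · exact Eventually.of_forall fun n =>
      hG.aestronglyMeasurable.inner (hψ n).aestronglyMeasurable
  · filter_upwards [Metric.tendstoUniformly_iff.1 hlim 1 one_pos] with n hn
    filter_upwards [ae_restrict_mem hK.measurableSet] with x hx
    refine (norm_inner_le_norm _ _).trans (mul_le_mul_of_nonneg_left ?_ (norm_nonneg _))
    have htri := norm_le_norm_add_norm_sub' (ψ n x) (φ x)
    have hdist := hn x
    rw [dist_comm, dist_eq_norm] at hdist
    linarith [hC x hx]
  · exact ae_of_all _ fun x => tendsto_const_nhds.inner (hlim.tendsto_at x)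

lemma HasWeakNegDiv.integral_eq_of_contDiff {Ω : Set E} (hΩ : IsOpen Ω) {G : E → E} {f : E → ℝ}
    (hG : LocallyIntegrableOn G Ω μ) (hf : LocallyIntegrableOn f Ω μ) (h : HasWeakNegDiv Ω μ G f)
    {φ : E → ℝ} (hφ : ContDiff ℝ 1 φ) (hc : HasCompactSupport φ) (hφΩ : tsupport φ ⊆ Ω) :
    ∫ x in Ω, ⟪G x, gradient φ x⟫ ∂μ = ∫ x in Ω, f x * φ x ∂μ := by
  obtain ⟨K, hK, hKΩ, ψ, hψ, hψK, hlim, hlim'⟩ :=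
    exists_contDiff_seq_tendstoUniformly hΩ hφ hc hφΩ
  have hgrad : TendstoUniformly (fun n => gradient (ψ n)) (gradient φ) atTop :=
    (InnerProductSpace.toDual ℝ E).symm.isometry.uniformContinuous.comp_tendstoUniformly hlim'
  have hleft := tendsto_setIntegral_inner_of_tendstoUniformly hΩ.measurableSet hK hKΩ
    (hG.integrableOn_compact_subset hKΩ hK)
    (fun n => continuous_gradient ((hψ n).of_le (mod_cast le_top)))
    (fun n x hx => gradient_eq_zero_of_notMem_tsupport fun hx' => hx (hψK n hx')) hgrad
  have hright := tendsto_setIntegral_inner_of_tendstoUniformly hΩ.measurableSet hK hKΩ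
    (hf.integrableOn_compact_subset hKΩ hK) (fun n => (hψ n).continuous)
    (fun n x hx => image_eq_zero_of_notMem_tsupport fun hx' => hx (hψK n hx')) hlim
  simp only [RCLike.inner_apply, conj_trivial, mul_comm _ (f _)] at hright
  refine tendsto_nhds_unique hleft (hright.congr fun n => ?_)
  exact (h (ψ n) (hψ n) (hK.of_isClosed_subset (isClosed_tsupport _) (hψK n))
    ((hψK n).trans hKΩ)).symm

lemma HasWeakNegDiv.integral_eq_of_contDiffOn {Ω K : Set E} (hΩ : IsOpen Ω) {G : E → E} {f : E → ℝ}
    (hG : LocallyIntegrableOn G Ω μ) (hf : LocallyIntegrableOn f Ω μ) (h : HasWeakNegDiv Ω μ G f)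
    (hK : IsCompact K) (hKΩ : K ⊆ Ω) {φ : E → ℝ} (hφ : ContDiffOn ℝ 1 φ Ω)
    (hφK : ∀ x ∈ Ω \ K, φ x = 0) :
    ∫ x in Ω, ⟪G x, gradient φ x⟫ ∂μ = ∫ x in Ω, f x * φ x ∂μ := by
  have htsupp : tsupport (Ω.indicator φ) ⊆ K := by
    refine closure_minimal (fun x hx => ?_) hK.isClosed
    by_contra hxK
    exact hx (indicator_apply_eq_zero.2 fun hxΩ => hφK x ⟨hxΩ, hxK⟩)
  have key := h.integral_eq_of_contDiff hΩ hG hf (contDiff_indicator hΩ hK.isClosed hKΩ hφ hφK)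
    (hK.of_isClosed_subset (isClosed_tsupport _) htsupp) (htsupp.trans hKΩ)
  have hleft : ∫ x in Ω, ⟪G x, gradient (Ω.indicator φ) x⟫ ∂μ = ∫ x in Ω, ⟪G x, gradient φ x⟫ ∂μ :=
    setIntegral_congr_fun hΩ.measurableSet fun x hx => by
      simp only [gradient_eq_of_eventuallyEq
        (eqOn_indicator.eventuallyEq_of_mem (hΩ.mem_nhds hx) : Ω.indicator φ =ᶠ[𝓝 x] φ)]
  have hright : ∫ x in Ω, f x * Ω.indicator φ x ∂μ = ∫ x in Ω, f x * φ x ∂μ :=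
    setIntegral_congr_fun hΩ.measurableSet fun x hx => by simp only [indicator_of_mem hx]
  rwa [hleft, hright] at key

end WeakForm

section PiconeQuotient

variable {X : Type*} {p δ : ℝ} {u v : X → ℝ} {x : X}

/-- The truncated quotient `(v - δ)⁺ / u`: Picone's identity compares its multiple of `∇ u` with
`∇ v`. -/
noncomputable def piconeRatio (δ : ℝ) (u v : X → ℝ) (x : X) : ℝ := max (v x - δ) 0 / u x

lemma piconeRatio_nonneg (hu : 0 ≤ u x) : 0 ≤ piconeRatio δ u v x := by
  unfold piconeRatio
  positivity

lemma piconeRatio_self_le_one (hδ : 0 ≤ δ) (hu : 0 < u x) : piconeRatio δ u u x ≤ 1 :=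
  (div_le_one hu).2 (max_le (sub_le_self _ hδ) hu.le)

lemma tendsto_piconeRatio {ι : Type*} {l : Filter ι} {δ : ι → ℝ} (hδ : Tendsto δ l (𝓝 0))
    (hv : 0 ≤ v x) : Tendsto (fun i => piconeRatio (δ i) u v x) l (𝓝 (v x / u x)) := by
  have hmax : Tendsto (fun i => max (v x - δ i) 0) l (𝓝 (max (v x - 0) 0)) :=
    (tendsto_const_nhds.sub hδ).max tendsto_const_nhds
  rw [sub_zero, max_eq_left hv] at hmax
  exact hmax.div_const _

lemma continuousOn_piconeRatio [TopologicalSpace X] {Ω : Set X} (hu : ContinuousOn u Ω)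
    (hu₀ : ∀ x ∈ Ω, u x ≠ 0) (hv : ContinuousOn v Ω) : ContinuousOn (piconeRatio δ u v) Ω :=
  ((hv.sub continuousOn_const).sup continuousOn_const).div hu hu₀

/-- The test function `((v - δ)⁺) ^ p / u ^ (p - 1)` of Picone's identity. The truncation at level
`δ > 0` gives it compact support in a bounded open set on whose boundary `v` vanishes. -/
noncomputable def piconeTest (p δ : ℝ) (u v : X → ℝ) (x : X) : ℝ :=
  max (v x - δ) 0 ^ p * u x ^ (1 - p)

lemma piconeTest_of_le (hp : p ≠ 0) (hv : v x ≤ δ) : piconeTest p δ u v x = 0 := by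
  rw [piconeTest, max_eq_right (sub_nonpos.2 hv), Real.zero_rpow hp, zero_mul]

end PiconeQuotient

section PiconeIdentity

variable {E : Type*} [NormedAddCommGroup E] [InnerProductSpace ℝ E] {p δ : ℝ} {u v : E → ℝ}
  {x : E}

lemma contDiffOn_piconeTest (hp : 1 < p) {Ω : Set E} (hu : ContDiffOn ℝ 1 u Ω)
    (hu₀ : ∀ x ∈ Ω, u x ≠ 0) (hv : ContDiffOn ℝ 1 v Ω) :
    ContDiffOn ℝ 1 (piconeTest p δ u v) Ω :=
  ((contDiff_max_zero_rpow hp).comp_contDiffOn (hv.sub contDiffOn_const)).mul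
    (hu.rpow_const_of_ne hu₀)

lemma gradient_piconeTest [CompleteSpace E] (hp : 1 < p) (hu : DifferentiableAt ℝ u x)
    (hux : 0 < u x) (hv : DifferentiableAt ℝ v x) :
    gradient (piconeTest p δ u v) x = (p * piconeRatio δ u v x ^ (p - 1)) • gradient v x
      - ((p - 1) * piconeRatio δ u v x ^ p) • gradient u x := by
  have hw : 0 ≤ max (v x - δ) 0 := le_max_right _ _
  have hfderiv := ((hasDerivAt_max_zero_rpow hp (v x - δ)).comp_hasFDerivAt x
    (hv.hasFDerivAt.sub_const δ)).mul
      ((Real.hasDerivAt_rpow_const (p := 1 - p) (Or.inl hux.ne')).comp_hasFDerivAt x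
        hu.hasFDerivAt)
  have hratio : max (v x - δ) 0 ^ (p - 1) * u x ^ (1 - p) = piconeRatio δ u v x ^ (p - 1) := by
    rw [piconeRatio, Real.div_rpow hw hux.le, div_eq_mul_inv, ← Real.rpow_neg hux.le, neg_sub]
  have hratio' : max (v x - δ) 0 ^ p * u x ^ (1 - p - 1) = piconeRatio δ u v x ^ p := by
    rw [piconeRatio, Real.div_rpow hw hux.le, div_eq_mul_inv, ← Real.rpow_neg hux.le]
    ring_nf
  have heq : fderiv ℝ (piconeTest p δ u v) x =
      (p * piconeRatio δ u v x ^ (p - 1)) • fderiv ℝ v x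
        - ((p - 1) * piconeRatio δ u v x ^ p) • fderiv ℝ u x := by
    refine (HasFDerivAt.fderiv hfderiv).trans ?_
    rw [← hratio, ← hratio']
    simp only [Function.comp_apply]
    module
  simp only [gradient, heq, map_sub, map_smul]

/-- The pointwise energy defect of the test function `piconeTest p δ u v` in Picone's identity. -/
noncomputable def piconeDefect [CompleteSpace E] (p δ : ℝ) (u v : E → ℝ) (x : E) : ℝ :=
  normPowBregman p (gradient v x) (piconeRatio δ u v x • gradient u x)

lemma piconeDefect_nonneg [CompleteSpace E] (hp : 1 < p) (x : E) : 0 ≤ piconeDefect p δ u v x :=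
  normPowBregman_nonneg hp _ _

lemma inner_pDual_gradient_piconeTest [CompleteSpace E] (hp : 1 < p)
    (hu : DifferentiableAt ℝ u x) (hux : 0 < u x) (hv : DifferentiableAt ℝ v x) :
    ⟪pDual p (gradient u x), gradient (piconeTest p δ u v) x⟫ =
      ‖gradient v x‖ ^ p - piconeDefect p δ u v x := by
  have hr : 0 ≤ piconeRatio δ u v x := piconeRatio_nonneg hux.le
  rw [gradient_piconeTest hp hu hux hv, inner_sub_right, real_inner_smul_right,
    real_inner_smul_right, inner_pDual_self (by linarith), piconeDefect, normPowBregman,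
    pDual_smul hp hr, real_inner_smul_left, norm_smul, Real.norm_of_nonneg hr,
    Real.mul_rpow hr (norm_nonneg _)]
  ring

lemma piconeDefect_of_le [CompleteSpace E] (hp : p ≠ 0) (hv : v x ≤ δ) :
    piconeDefect p δ u v x = ‖gradient v x‖ ^ p := by
  rw [piconeDefect, piconeRatio, max_eq_right (sub_nonpos.2 hv), zero_div, zero_smul]
  simp [normPowBregman, pDual, Real.zero_rpow hp]

lemma continuousOn_piconeDefect [CompleteSpace E] (hp : 1 < p) {Ω : Set E} (hΩ : IsOpen Ω)
    (hu : ContDiffOn ℝ 1 u Ω) (hu₀ : ∀ x ∈ Ω, u x ≠ 0) (hv : ContDiffOn ℝ 1 v Ω) :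
    ContinuousOn (piconeDefect p δ u v) Ω := by
  have hpair : ContinuousOn (fun x => (gradient v x, piconeRatio δ u v x • gradient u x)) Ω :=
    (continuousOn_gradient hΩ hv).prodMk
      ((continuousOn_piconeRatio hu.continuousOn hu₀ hv.continuousOn).smul
        (continuousOn_gradient hΩ hu))
  exact ((continuous_normPowBregman hp).comp_continuousOn hpair).congr fun _ _ => rfl

lemma tendsto_piconeDefect [CompleteSpace E] {ι : Type*} {l : Filter ι} {δ : ι → ℝ} (hp : 1 < p)
    (hδ : Tendsto δ l (𝓝 0)) (hv : 0 ≤ v x) :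
    Tendsto (fun i => piconeDefect p (δ i) u v x) l
      (𝓝 (normPowBregman p (gradient v x) ((v x / u x) • gradient u x))) := by
  have hpair : Tendsto (fun i => (gradient v x, piconeRatio (δ i) u v x • gradient u x)) l
      (𝓝 (gradient v x, (v x / u x) • gradient u x)) :=
    tendsto_const_nhds.prodMk_nhds ((tendsto_piconeRatio hδ hv).smul_const _)
  simpa only [piconeDefect, Function.comp_def] using
    ((continuous_normPowBregman hp).tendsto _).comp hpair

end PiconeIdentity

lemma isCompact_inter_le_of_eq_zero_on_frontier {X : Type*} [PseudoMetricSpace X] [ProperSpace X]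
    {Ω : Set X} (hΩ : IsOpen Ω) (hb : Bornology.IsBounded Ω) {v : X → ℝ}
    (hv : ContinuousOn v (closure Ω)) (hv₀ : ∀ x ∈ frontier Ω, v x = 0) {δ : ℝ} (hδ : 0 < δ) :
    IsCompact (Ω ∩ {x | δ ≤ v x}) := by
  have heq : Ω ∩ {x | δ ≤ v x} = closure Ω ∩ {x | δ ≤ v x} := by
    refine Subset.antisymm (inter_subset_inter_left _ subset_closure) fun x hx => ⟨?_, hx.2⟩
    by_contra hxΩ
    have hxv : δ ≤ v x := hx.2
    rw [hv₀ x (hΩ.frontier_eq ▸ ⟨hx.1, hxΩ⟩)] at hxv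
    exact hδ.not_ge hxv
  rw [heq]
  exact hb.isCompact_closure.of_isClosed_subset
    (hv.preimage_isClosed_of_isClosed isClosed_closure isClosed_Ici) inter_subset_left

lemma tendsto_setIntegral_max_sub_rpow {X ι : Type*} [MetricSpace X] [ProperSpace X]
    [MeasurableSpace X] [OpensMeasurableSpace X] {μ : Measure X} [IsFiniteMeasureOnCompacts μ]
    {l : Filter ι} [l.IsCountablyGenerated] {δ : ι → ℝ} {p : ℝ} (hp : 0 ≤ p) {Ω : Set X}
    (hΩ : MeasurableSet Ω) (hb : Bornology.IsBounded Ω) {v : X → ℝ}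
    (hv : ContinuousOn v (closure Ω)) (hv₀ : ∀ x ∈ Ω, 0 ≤ v x) (hδ₀ : ∀ i, 0 ≤ δ i)
    (hδ : Tendsto δ l (𝓝 0)) :
    Tendsto (fun i => ∫ x in Ω, max (v x - δ i) 0 ^ p ∂μ) l (𝓝 (∫ x in Ω, v x ^ p ∂μ)) := by
  have hvp : IntegrableOn (fun x => v x ^ p) Ω μ :=
    ((hv.rpow_const fun _ _ => Or.inr hp).integrableOn_compact hb.isCompact_closure).mono_set
      subset_closure
  refine tendsto_integral_filter_of_dominated_convergence (fun x => v x ^ p)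
    (Eventually.of_forall fun i => ?_) (Eventually.of_forall fun i => ?_) hvp ?_
  · exact ((((hv.mono subset_closure).sub continuousOn_const).sup continuousOn_const).rpow_const
      fun _ _ => Or.inr hp).aestronglyMeasurable hΩ
  · filter_upwards [ae_restrict_mem hΩ] with x hx
    rw [Real.norm_of_nonneg (by positivity)]
    exact Real.rpow_le_rpow (le_max_right _ _) (max_le (sub_le_self _ (hδ₀ i)) (hv₀ x hx)) hp
  · filter_upwards [ae_restrict_mem hΩ] with x hx
    have hmax : Tendsto (fun i => max (v x - δ i) 0) l (𝓝 (max (v x - 0) 0)) :=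
      (tendsto_const_nhds.sub hδ).max tendsto_const_nhds
    rw [sub_zero, max_eq_left (hv₀ x hx)] at hmax
    exact hmax.rpow_const (Or.inr hp)

section IsPositiveEigenfunction

variable {E : Type*} [NormedAddCommGroup E] [InnerProductSpace ℝ E] [FiniteDimensional ℝ E]
  [MeasurableSpace E] {μ : Measure E} {p lam δ : ℝ} {Ω : Set E} {u v : E → ℝ}

/-- A positive `C¹` weak solution of `-Δ_p u = lam u ^ (p - 1)` on `Ω`, with respect to `μ`, of
finite energy and with vanishing boundary values. -/
structure IsPositiveEigenfunction (p lam : ℝ) (Ω : Set E) (μ : Measure E) (u : E → ℝ) : Prop where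
  contDiffOn : ContDiffOn ℝ 1 u Ω
  continuousOn_closure : ContinuousOn u (closure Ω)
  pos : ∀ x ∈ Ω, 0 < u x
  eq_zero_of_mem_frontier : ∀ x ∈ frontier Ω, u x = 0
  integrableOn_norm_gradient_rpow : IntegrableOn (fun x => ‖gradient u x‖ ^ p) Ω μ
  hasWeakNegDiv :
    HasWeakNegDiv Ω μ (fun x => pDual p (gradient u x)) fun x => lam * u x ^ (p - 1)

namespace IsPositiveEigenfunction

lemma differentiableAt (hu : IsPositiveEigenfunction p lam Ω μ u) (hΩ : IsOpen Ω) {x : E}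
    (hx : x ∈ Ω) : DifferentiableAt ℝ u x :=
  (hu.contDiffOn.contDiffAt (hΩ.mem_nhds hx)).differentiableAt one_ne_zero

lemma exists_isMaxOn (hu : IsPositiveEigenfunction p lam Ω μ u) (hΩ : IsOpen Ω)
    (hb : Bornology.IsBounded Ω) (hne : Ω.Nonempty) : ∃ z ∈ Ω, IsMaxOn u Ω z := by
  obtain ⟨x, hx⟩ := hne
  obtain ⟨z, hz, hmax⟩ := hb.isCompact_closure.exists_isMaxOn ⟨x, subset_closure hx⟩
    hu.continuousOn_closure
  refine ⟨z, ?_, fun y hy => hmax (subset_closure hy)⟩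
  by_contra hzΩ
  have hxz : u x ≤ u z := hmax (subset_closure hx)
  rw [hu.eq_zero_of_mem_frontier z (hΩ.frontier_eq ▸ ⟨hz, hzΩ⟩)] at hxz
  exact (hu.pos x hx).not_ge hxz

variable [BorelSpace E]

lemma integral_piconeTest [IsFiniteMeasureOnCompacts μ] (hu : IsPositiveEigenfunction p lam Ω μ u)
    (hΩ : IsOpen Ω) (hb : Bornology.IsBounded Ω) (hp : 1 < p) (hv : ContDiffOn ℝ 1 v Ω)
    (hvc : ContinuousOn v (closure Ω)) (hv₀ : ∀ x ∈ frontier Ω, v x = 0) (hδ : 0 < δ) :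
    ∫ x in Ω, ⟪pDual p (gradient u x), gradient (piconeTest p δ u v) x⟫ ∂μ =
      lam * ∫ x in Ω, max (v x - δ) 0 ^ p ∂μ := by
  have hflux : ContinuousOn (fun x => pDual p (gradient u x)) Ω :=
    (continuous_pDual hp).comp_continuousOn (continuousOn_gradient hΩ hu.contDiffOn)
  have hsource : ContinuousOn (fun x => lam * u x ^ (p - 1)) Ω :=
    continuousOn_const.mul (hu.contDiffOn.continuousOn.rpow_const fun x hx =>
      Or.inl (hu.pos x hx).ne')
  rw [hu.hasWeakNegDiv.integral_eq_of_contDiffOn hΩ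
    (hflux.locallyIntegrableOn hΩ.measurableSet) (hsource.locallyIntegrableOn hΩ.measurableSet)
    (isCompact_inter_le_of_eq_zero_on_frontier hΩ hb hvc hv₀ hδ) inter_subset_left
    (contDiffOn_piconeTest hp hu.contDiffOn (fun x hx => (hu.pos x hx).ne') hv) ?_,
    ← integral_const_mul]
  · refine setIntegral_congr_fun hΩ.measurableSet fun x hx => ?_
    have hcancel : u x ^ (p - 1) * u x ^ (1 - p) = 1 := by
      rw [← Real.rpow_add (hu.pos x hx)]
      simp
    rw [piconeTest]
    linear_combination (lam * max (v x - δ) 0 ^ p) * hcancel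
  · rintro x ⟨hxΩ, hxv⟩
    have hxδ : v x ≤ δ := le_of_not_ge fun h => hxv ⟨hxΩ, h⟩
    exact piconeTest_of_le (by linarith) hxδ

lemma integrableOn_piconeDefect [IsFiniteMeasureOnCompacts μ]
    (hu : IsPositiveEigenfunction p lam Ω μ u) (hΩ : IsOpen Ω) (hb : Bornology.IsBounded Ω)
    (hp : 1 < p) (hv : ContDiffOn ℝ 1 v Ω) (hvc : ContinuousOn v (closure Ω))
    (hv₀ : ∀ x ∈ frontier Ω, v x = 0) (hint : IntegrableOn (fun x => ‖gradient v x‖ ^ p) Ω μ)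
    (hδ : 0 < δ) : IntegrableOn (piconeDefect p δ u v) Ω μ := by
  have hnorm : ContinuousOn (fun x => ‖gradient v x‖ ^ p) Ω :=
    (continuousOn_gradient hΩ hv).norm.rpow_const fun _ _ => Or.inr (by linarith)
  have hdefect := continuousOn_piconeDefect (δ := δ) hp hΩ hu.contDiffOn
    (fun x hx => (hu.pos x hx).ne') hv
  have hsub : IntegrableOn (fun x => ‖gradient v x‖ ^ p - piconeDefect p δ u v x) Ω μ := by
    refine IntegrableOn.of_forall_sdiff_eq_zero (((hnorm.sub hdefect).mono
      inter_subset_left).integrableOn_compact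
        (isCompact_inter_le_of_eq_zero_on_frontier hΩ hb hvc hv₀ hδ)) hΩ.measurableSet ?_
    rintro x ⟨hxΩ, hxv⟩
    have hxδ : v x ≤ δ := le_of_not_ge fun h => hxv ⟨hxΩ, h⟩
    simp only [piconeDefect_of_le (by linarith : p ≠ 0) hxδ, sub_self]
  exact (hint.sub hsub).congr (ae_of_all _ fun x => sub_sub_cancel _ _)

lemma integral_piconeDefect [IsFiniteMeasureOnCompacts μ]
    (hu : IsPositiveEigenfunction p lam Ω μ u) (hΩ : IsOpen Ω) (hb : Bornology.IsBounded Ω)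
    (hp : 1 < p) (hv : ContDiffOn ℝ 1 v Ω) (hvc : ContinuousOn v (closure Ω))
    (hv₀ : ∀ x ∈ frontier Ω, v x = 0) (hint : IntegrableOn (fun x => ‖gradient v x‖ ^ p) Ω μ)
    (hδ : 0 < δ) :
    ∫ x in Ω, piconeDefect p δ u v x ∂μ =
      ∫ x in Ω, ‖gradient v x‖ ^ p ∂μ - lam * ∫ x in Ω, max (v x - δ) 0 ^ p ∂μ := by
  rw [← hu.integral_piconeTest hΩ hb hp hv hvc hv₀ hδ, eq_sub_iff_add_eq', ← eq_sub_iff_add_eq,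
    ← integral_sub hint (hu.integrableOn_piconeDefect hΩ hb hp hv hvc hv₀ hint hδ)]
  exact setIntegral_congr_fun hΩ.measurableSet fun x hx =>
    inner_pDual_gradient_piconeTest hp (hu.differentiableAt hΩ hx) (hu.pos x hx)
      ((hv.contDiffAt (hΩ.mem_nhds hx)).differentiableAt one_ne_zero)

lemma tendsto_integral_piconeDefect [IsFiniteMeasureOnCompacts μ]
    (hu : IsPositiveEigenfunction p lam Ω μ u) (hv : IsPositiveEigenfunction p lam Ω μ v)
    (hΩ : IsOpen Ω) (hb : Bornology.IsBounded Ω) (hp : 1 < p) {ι : Type*} {l : Filter ι}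
    [l.IsCountablyGenerated] {δ : ι → ℝ} (hδ₀ : ∀ i, 0 < δ i) (hδ : Tendsto δ l (𝓝 0)) :
    Tendsto (fun i => ∫ x in Ω, piconeDefect p (δ i) u v x ∂μ) l
      (𝓝 (∫ x in Ω, ‖gradient v x‖ ^ p ∂μ - lam * ∫ x in Ω, v x ^ p ∂μ)) := by
  simp only [hu.integral_piconeDefect hΩ hb hp hv.contDiffOn hv.continuousOn_closure
    hv.eq_zero_of_mem_frontier hv.integrableOn_norm_gradient_rpow (hδ₀ _)]
  exact tendsto_const_nhds.sub ((tendsto_setIntegral_max_sub_rpow (by linarith) hΩ.measurableSet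
    hb hv.continuousOn_closure (fun x hx => (hv.pos x hx).le) (fun i => (hδ₀ i).le)
    hδ).const_mul lam)

-- `u` itself is not an admissible test function: the energy identity is recovered from the identity
-- of Picone with `v = u`, whose defect tends to zero.
lemma integral_norm_gradient_rpow [IsFiniteMeasureOnCompacts μ]
    (hu : IsPositiveEigenfunction p lam Ω μ u) (hΩ : IsOpen Ω) (hb : Bornology.IsBounded Ω)
    (hp : 1 < p) : ∫ x in Ω, ‖gradient u x‖ ^ p ∂μ = lam * ∫ x in Ω, u x ^ p ∂μ := by
  obtain ⟨δ, -, hδ₀, hδ⟩ := exists_seq_strictAnti_tendsto (0 : ℝ)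
  have hint (n : ℕ) := hu.integrableOn_piconeDefect hΩ hb hp hu.contDiffOn
    hu.continuousOn_closure hu.eq_zero_of_mem_frontier hu.integrableOn_norm_gradient_rpow (hδ₀ n)
  have hzero : Tendsto (fun n => ∫ x in Ω, piconeDefect p (δ n) u u x ∂μ) atTop (𝓝 0) := by
    rw [← integral_zero E ℝ (μ := μ.restrict Ω)]
    refine tendsto_integral_of_dominated_convergence (fun x => p * ‖gradient u x‖ ^ p)
      (fun n => (hint n).aestronglyMeasurable)
      (hu.integrableOn_norm_gradient_rpow.const_mul p) (fun n => ?_) ?_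
    · filter_upwards [ae_restrict_mem hΩ.measurableSet] with x hx
      rw [Real.norm_of_nonneg (piconeDefect_nonneg hp x)]
      exact normPowBregman_smul_le hp _ (piconeRatio_nonneg (hu.pos x hx).le)
        (piconeRatio_self_le_one (hδ₀ n).le (hu.pos x hx))
    · filter_upwards [ae_restrict_mem hΩ.measurableSet] with x hx
      have hlim := tendsto_piconeDefect (u := u) hp hδ (hu.pos x hx).le
      rwa [div_self (hu.pos x hx).ne', one_smul, normPowBregman_self (by linarith)] at hlim
  exact sub_eq_zero.1 (tendsto_nhds_unique
    (hu.tendsto_integral_piconeDefect hu hΩ hb hp hδ₀ hδ) hzero)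

lemma gradient_eq_div_smul_gradient [IsFiniteMeasureOnCompacts μ] [μ.IsOpenPosMeasure]
    (hu : IsPositiveEigenfunction p lam Ω μ u) (hv : IsPositiveEigenfunction p lam Ω μ v)
    (hΩ : IsOpen Ω) (hb : Bornology.IsBounded Ω) (hp : 1 < p) {x : E} (hx : x ∈ Ω) :
    gradient v x = (v x / u x) • gradient u x := by
  obtain ⟨δ, -, hδ₀, hδ⟩ := exists_seq_strictAnti_tendsto (0 : ℝ)
  have hlim := hu.tendsto_integral_piconeDefect hv hΩ hb hp hδ₀ hδ
  rw [hv.integral_norm_gradient_rpow hΩ hb hp, sub_self] at hlim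
  have hpointwise : ∀ᵐ y ∂μ.restrict Ω, Tendsto (fun n => piconeDefect p (δ n) u v y) atTop
      (𝓝 (normPowBregman p (gradient v y) ((v y / u y) • gradient u y))) :=
    (ae_restrict_mem hΩ.measurableSet).mono fun y hy => tendsto_piconeDefect hp hδ (hv.pos y hy).le
  have hint (n : ℕ) := hu.integrableOn_piconeDefect hΩ hb hp hv.contDiffOn
    hv.continuousOn_closure hv.eq_zero_of_mem_frontier hv.integrableOn_norm_gradient_rpow (hδ₀ n)
  have hae : (fun y => normPowBregman p (gradient v y) ((v y / u y) • gradient u y))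
      =ᵐ[μ.restrict Ω] 0 :=
    ae_eq_zero_of_tendsto_integral_zero (fun n => ae_of_all _ (piconeDefect_nonneg hp)) hint hlim
      hpointwise
  have heq : gradient v =ᵐ[μ.restrict Ω] fun y => (v y / u y) • gradient u y :=
    hae.mono fun y hy => eq_of_normPowBregman_eq_zero hp hy
  have hcont : ContinuousOn (fun y => (v y / u y) • gradient u y) Ω :=
    (hv.contDiffOn.continuousOn.div hu.contDiffOn.continuousOn fun y hy => (hu.pos y hy).ne').smul
      (continuousOn_gradient hΩ hu.contDiffOn)
  exact Measure.eqOn_open_of_ae_eq heq hΩ (continuousOn_gradient hΩ hv.contDiffOn) hcont hx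

lemma exists_eq_const_mul [IsFiniteMeasureOnCompacts μ] [μ.IsOpenPosMeasure]
    (hu : IsPositiveEigenfunction p lam Ω μ u) (hv : IsPositiveEigenfunction p lam Ω μ v)
    (hΩ : IsOpen Ω) (hb : Bornology.IsBounded Ω) (hΩc : IsPreconnected Ω) (hp : 1 < p) :
    ∃ c, ∀ x ∈ Ω, v x = c * u x := by
  have hquot {x : E} (hx : x ∈ Ω) : HasFDerivAt (fun y => v y / u y) (0 : E →L[ℝ] ℝ) x := by
    have hux := (hu.pos x hx).ne'
    have hprop : fderiv ℝ v x = (v x / u x) • fderiv ℝ u x := by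
      rw [← toDual_gradient, ← toDual_gradient, hu.gradient_eq_div_smul_gradient hv hΩ hb hp hx,
        map_smul]
    have hcoeff : v x * -(u x ^ 2)⁻¹ + (u x)⁻¹ * (v x / u x) = 0 := by
      field_simp
      ring
    have hdiv := (hv.differentiableAt hΩ hx).hasFDerivAt.mul
      ((hasDerivAt_inv hux).comp_hasFDerivAt x (hu.differentiableAt hΩ hx).hasFDerivAt)
    rw [hprop] at hdiv
    simp only [Function.comp_apply, smul_smul, ← add_smul, hcoeff, zero_smul] at hdiv
    exact hdiv.congr_of_eventuallyEq (Eventually.of_forall fun y => div_eq_mul_inv _ _)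
  obtain ⟨c, hc⟩ := hΩ.exists_is_const_of_fderiv_eq_zero (𝕜 := ℝ) hΩc
    (fun x hx => (hquot hx).differentiableAt.differentiableWithinAt) fun x hx => (hquot hx).fderiv
  exact ⟨c, fun x hx => (div_eq_iff (hu.pos x hx).ne').1 (hc x hx)⟩

end IsPositiveEigenfunction

end IsPositiveEigenfunction

section Isometry

variable {E F : Type*} [NormedAddCommGroup E] [InnerProductSpace ℝ E]
  [NormedAddCommGroup F] [InnerProductSpace ℝ F] {p lam : ℝ}

lemma gradient_comp_linearIsometryEquiv [CompleteSpace E] [CompleteSpace F]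
    (σ : E ≃ₗᵢ[ℝ] F) (u : F → ℝ) (x : E) :
    gradient (u ∘ σ) x = σ.symm (gradient u (σ x)) := by
  refine ext_inner_right ℝ fun y => ?_
  have hcomp := σ.toContinuousLinearEquiv.comp_right_fderiv (f := u) (x := x)
  change fderiv ℝ (u ∘ σ) x = _ at hcomp
  rw [inner_gradient_left, hcomp, σ.symm.inner_map_eq_flip, LinearIsometryEquiv.symm_symm,
    inner_gradient_left]
  rfl

lemma pDual_linearIsometryEquiv (σ : E ≃ₗᵢ[ℝ] F) (y : E) : pDual p (σ y) = σ (pDual p y) := by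
  rw [pDual, pDual, σ.norm_map, map_smul]

variable [FiniteDimensional ℝ E] [MeasurableSpace E] [BorelSpace E]
  [FiniteDimensional ℝ F] [MeasurableSpace F] [BorelSpace F] {Ω : Set F} {u : F → ℝ}

lemma setIntegral_comp_linearIsometryEquiv (σ : E ≃ₗᵢ[ℝ] F) (g : F → ℝ) (Ω : Set F) :
    ∫ x in σ ⁻¹' Ω, g (σ x) = ∫ x in Ω, g x :=
  σ.measurePreserving.setIntegral_preimage_emb σ.toHomeomorph.measurableEmbedding g Ω

lemma HasWeakNegDiv.comp_linearIsometryEquiv {G : F → F} {f : F → ℝ} (σ : E ≃ₗᵢ[ℝ] F)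
    (h : HasWeakNegDiv Ω volume G f) :
    HasWeakNegDiv (σ ⁻¹' Ω) volume (fun x => σ.symm (G (σ x))) fun x => f (σ x) := by
  intro φ hφ hc hφΩ
  have htsupp : tsupport (φ ∘ σ.symm) ⊆ Ω := by
    intro x hx
    have hx' : σ.symm x ∈ tsupport φ :=
      tsupport_comp_subset_preimage φ σ.symm.continuous hx
    simpa using hφΩ hx'
  have hweak := h (φ ∘ σ.symm) (hφ.comp σ.symm.contDiff)
    (hc.comp_homeomorph σ.symm.toHomeomorph) htsupp
  rw [← setIntegral_comp_linearIsometryEquiv σ (fun x => ⟪G x, gradient (φ ∘ σ.symm) x⟫),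
    ← setIntegral_comp_linearIsometryEquiv σ (fun x => f x * (φ ∘ σ.symm) x)] at hweak
  simpa only [gradient_comp_linearIsometryEquiv, LinearIsometryEquiv.symm_symm,
    LinearIsometryEquiv.symm_apply_apply, Function.comp_apply, σ.symm.inner_map_eq_flip] using hweak

namespace IsPositiveEigenfunction

lemma comp_linearIsometryEquiv (hu : IsPositiveEigenfunction p lam Ω volume u) (σ : E ≃ₗᵢ[ℝ] F) :
    IsPositiveEigenfunction p lam (σ ⁻¹' Ω) volume (u ∘ σ) where
  contDiffOn := hu.contDiffOn.comp σ.contDiff.contDiffOn (mapsTo_preimage _ _)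
  continuousOn_closure := by
    have hclosure : closure (σ ⁻¹' Ω) = σ ⁻¹' closure Ω := (σ.toHomeomorph.preimage_closure Ω).symm
    rw [hclosure]
    exact hu.continuousOn_closure.comp σ.continuous.continuousOn (mapsTo_preimage _ _)
  pos x hx := hu.pos _ hx
  eq_zero_of_mem_frontier x hx := by
    have hfrontier : frontier (σ ⁻¹' Ω) = σ ⁻¹' frontier Ω :=
      (σ.toHomeomorph.preimage_frontier Ω).symm
    exact hu.eq_zero_of_mem_frontier _ (hfrontier ▸ hx : x ∈ σ ⁻¹' frontier Ω)
  integrableOn_norm_gradient_rpow := by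
    simp only [gradient_comp_linearIsometryEquiv, LinearIsometryEquiv.norm_map]
    exact (σ.measurePreserving.integrableOn_comp_preimage
      σ.toHomeomorph.measurableEmbedding).2 hu.integrableOn_norm_gradient_rpow
  hasWeakNegDiv := by
    simp only [gradient_comp_linearIsometryEquiv, pDual_linearIsometryEquiv]
    exact hu.hasWeakNegDiv.comp_linearIsometryEquiv σ

lemma comp_linearIsometryEquiv_eqOn (hu : IsPositiveEigenfunction p lam Ω volume u)
    (hΩ : IsOpen Ω) (hb : Bornology.IsBounded Ω) (hΩc : IsPreconnected Ω) (hp : 1 < p)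
    {σ : F ≃ₗᵢ[ℝ] F} (hσ : σ ⁻¹' Ω = Ω) : EqOn (u ∘ σ) u Ω := by
  have hu' := hu.comp_linearIsometryEquiv σ
  rw [hσ] at hu'
  obtain ⟨c, hc⟩ := hu.exists_eq_const_mul hu' hΩ hb hΩc hp
  intro x hx
  obtain ⟨z, hz, hmax⟩ := hu.exists_isMaxOn hΩ hb ⟨x, hx⟩
  have hσz : σ z ∈ Ω := hσ.ge hz
  have hz' : σ.symm z ∈ Ω := hσ.le (by simpa using hz)
  have hc₁ : c ≤ 1 := by
    refine le_of_mul_le_mul_right ?_ (hu.pos z hz)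
    rw [← hc z hz, one_mul]
    exact hmax hσz
  have hc₂ : 1 ≤ c := by
    have hcz := hc _ hz'
    rw [Function.comp_apply, σ.apply_symm_apply] at hcz
    refine le_of_mul_le_mul_right ?_ (hu.pos _ hz')
    rw [← hcz, one_mul]
    exact hmax hz'
  rw [hc x hx, le_antisymm hc₁ hc₂, one_mul]

end IsPositiveEigenfunction

end Isometry

section BallDiffBall

variable {E : Type*} [NormedAddCommGroup E] [InnerProductSpace ℝ E]

lemma starConvex_neg_setOf_inner_lt_mul_norm {c : E} {k : ℝ} (hk₁ : -‖c‖ < k) (hk₂ : k ≤ ‖c‖) :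
    StarConvex ℝ (-c) {y : E | ⟪c, y⟫ < k * ‖y‖} := by
  intro y hy a b ha hb hab
  have hc : 0 < ‖c‖ := by linarith
  rcases hb.eq_or_lt with rfl | hb
  · obtain rfl : a = 1 := by linarith
    simp only [one_smul, zero_smul, add_zero, mem_ofPred_eq, inner_neg_right, norm_neg,
      real_inner_self_eq_norm_mul_norm]
    linarith [mul_lt_mul_of_pos_right hk₁ hc]
  · have hnorm : |‖a • -c + b • y‖ - b * ‖y‖| ≤ a * ‖c‖ := by
      have h := abs_norm_sub_norm_le (a • -c + b • y) (b • y)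
      rwa [add_sub_cancel_right, norm_smul b, norm_smul a, norm_neg, Real.norm_of_nonneg ha,
        Real.norm_of_nonneg hb.le] at h
    have hshift : |k * (‖a • -c + b • y‖ - b * ‖y‖)| ≤ ‖c‖ * (a * ‖c‖) := by
      rw [abs_mul]
      exact mul_le_mul (abs_le.2 ⟨hk₁.le, hk₂⟩) hnorm (abs_nonneg _) hc.le
    have hy' : b * ⟪c, y⟫ < b * (k * ‖y‖) := mul_lt_mul_of_pos_left hy hb
    rw [mem_ofPred_eq, inner_add_right, real_inner_smul_right, real_inner_smul_right,
      inner_neg_right, real_inner_self_eq_norm_mul_norm]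
    linarith [neg_abs_le (k * (‖a • -c + b • y‖ - b * ‖y‖))]

lemma isPreconnected_setOf_inner_lt_mul_norm (hE : 1 < Module.rank ℝ E) (c : E) (k : ℝ) :
    IsPreconnected {y : E | ⟪c, y⟫ < k * ‖y‖} := by
  rcases le_or_gt k (-‖c‖) with hk₁ | hk₁
  · convert isPreconnected_empty (α := E)
    refine eq_empty_of_forall_notMem fun y hy => ?_
    have hCS := neg_le_of_abs_le (abs_real_inner_le_norm c y)
    have hk := mul_le_mul_of_nonneg_right hk₁ (norm_nonneg y)
    rw [mem_ofPred_eq] at hy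
    linarith
  rcases le_or_gt k ‖c‖ with hk₂ | hk₂
  · have hc : 0 < ‖c‖ := by linarith
    refine ((starConvex_neg_setOf_inner_lt_mul_norm hk₁ hk₂).isPathConnected
      ?_).isConnected.isPreconnected
    rw [mem_ofPred_eq, inner_neg_right, real_inner_self_eq_norm_mul_norm, norm_neg]
    linarith [mul_lt_mul_of_pos_right hk₁ hc]
  · convert (isConnected_compl_singleton_of_one_lt_rank hE (0 : E)).isPreconnected
    ext y
    refine ⟨fun hy hy₀ => by simp [mem_singleton_iff.1 hy₀] at hy, fun hy => ?_⟩
    exact (real_inner_le_norm c y).trans_lt (mul_lt_mul_of_pos_right hk₂ (norm_pos_iff.2 hy))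

lemma isPreconnected_setOf_norm_eq_one_inner_lt (hE : 1 < Module.rank ℝ E) (c : E) (k : ℝ) :
    IsPreconnected {e : E | ‖e‖ = 1 ∧ ⟪c, e⟫ < k} := by
  have hne (y : E) (hy : ⟪c, y⟫ < k * ‖y‖) : y ≠ 0 := by
    rintro rfl
    simp at hy
  convert (isPreconnected_setOf_inner_lt_mul_norm hE c k).image (fun y => ‖y‖⁻¹ • y)
    ((continuousOn_id.norm.inv₀ fun y hy => norm_ne_zero_iff.2 (hne y hy)).smul continuousOn_id)
  ext e
  constructor
  · rintro ⟨he, hek⟩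
    exact ⟨e, by simpa [he] using hek, by simp [he]⟩
  · rintro ⟨y, hy, rfl⟩
    have hy₀ := norm_pos_iff.2 (hne y hy)
    refine ⟨norm_smul_inv_norm (𝕜 := ℝ) (norm_pos_iff.1 hy₀), ?_⟩
    rw [real_inner_smul_right, inv_mul_lt_iff₀ hy₀, mul_comm]
    exact hy

lemma lt_norm_of_lt_inner {e z : E} {r : ℝ} (he : ‖e‖ = 1) (h : r < ⟪e, z⟫) : r < ‖z‖ := by
  simpa [he] using h.trans_le (real_inner_le_norm e z)

lemma exists_norm_eq_one_lt_inner {z : E} {r : ℝ} (hr : 0 ≤ r) (h : r < ‖z‖) :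
    ∃ e : E, ‖e‖ = 1 ∧ r < ⟪e, z⟫ := by
  have hz : 0 < ‖z‖ := hr.trans_lt h
  refine ⟨‖z‖⁻¹ • z, norm_smul_inv_norm (𝕜 := ℝ) (norm_pos_iff.1 hz), ?_⟩
  rwa [real_inner_smul_left, real_inner_self_eq_norm_mul_norm, inv_mul_cancel_left₀ hz.ne']

lemma mem_ball_diff_closedBall_iff {F : Type*} [SeminormedAddCommGroup F] {c z : F} {r R : ℝ} :
    z ∈ ball 0 R \ closedBall c r ↔ ‖z‖ < R ∧ r < ‖z - c‖ := by
  rw [Set.mem_sdiff, mem_ball_zero_iff, mem_closedBall, dist_eq_norm, not_le]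

/-- The part of the ball of radius `R` around `0` beyond the hyperplane with normal `e` which, for
`‖e‖ = 1`, is tangent to the ball of radius `r` around `c`. -/
def ballSlice (c : E) (r R : ℝ) (e : E) : Set E := ball 0 R ∩ {z | r < ⟪e, z - c⟫}

lemma isPreconnected_ballSlice (c : E) (r R : ℝ) (e : E) :
    IsPreconnected (ballSlice c r R e) := by
  have h := ((convex_ball (0 : E) R).inter (convex_halfSpace_gt (innerSL ℝ e).isLinear
    (⟪e, c⟫ + r))).isPreconnected
  simp only [ballSlice, inner_sub_right, lt_sub_iff_add_lt']
  exact h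

lemma ballSlice_subset {e : E} (he : ‖e‖ = 1) (c : E) (r R : ℝ) :
    ballSlice c r R e ⊆ ball 0 R \ closedBall c r := fun _ hz =>
  mem_ball_diff_closedBall_iff.2 ⟨mem_ball_zero_iff.1 hz.1, lt_norm_of_lt_inner he hz.2⟩

lemma smul_mem_ballSlice {e : E} (he : ‖e‖ = 1) {c : E} {r R τ : ℝ} (hτ₀ : 0 ≤ τ) (hτR : τ < R)
    (hτ : ⟪c, e⟫ < τ - r) : τ • e ∈ ballSlice c r R e := by
  refine ⟨?_, ?_⟩
  · rwa [mem_ball_zero_iff, norm_smul, he, mul_one, Real.norm_of_nonneg hτ₀]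
  · rw [mem_ofPred_eq, inner_sub_right, real_inner_smul_right, real_inner_self_eq_norm_mul_norm, he,
      real_inner_comm]
    linarith

lemma exists_mem_ballSlice {c x : E} {r R : ℝ} (hr : 0 ≤ r)
    (hx : x ∈ ball 0 R \ closedBall c r) :
    ∃ e : E, ‖e‖ = 1 ∧ x ∈ ballSlice c r R e ∧ ⟪c, e⟫ < R - r := by
  obtain ⟨hxR, hxr⟩ := mem_ball_diff_closedBall_iff.1 hx
  obtain ⟨e, he, hex⟩ := exists_norm_eq_one_lt_inner hr hxr
  refine ⟨e, he, ⟨hx.1, hex⟩, ?_⟩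
  rw [inner_sub_right] at hex
  have hxe := real_inner_le_norm e x
  rw [he, one_mul] at hxe
  rw [real_inner_comm]
  linarith

lemma isPreconnected_ball_diff_closedBall (hE : 1 < Module.rank ℝ E) (c : E) {r : ℝ}
    (hr : 0 ≤ r) (R : ℝ) : IsPreconnected (ball (0 : E) R \ closedBall c r) := by
  refine isPreconnected_of_forall_pair fun x hx y hy => ?_
  obtain ⟨e, he, hxe, heR⟩ := exists_mem_ballSlice hr hx
  obtain ⟨f, hf, hyf, hfR⟩ := exists_mem_ballSlice hr hy
  have hR : 0 < R := (norm_nonneg x).trans_lt (mem_ball_zero_iff.1 hx.1)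
  obtain ⟨τ, hτ, hτR⟩ := exists_between (max_lt hR (max_lt
    (lt_sub_iff_add_lt.1 heR) (lt_sub_iff_add_lt.1 hfR)))
  obtain ⟨hτ₀, hτe, hτf⟩ : 0 < τ ∧ ⟪c, e⟫ < τ - r ∧ ⟪c, f⟫ < τ - r := by
    simpa only [max_lt_iff, lt_sub_iff_add_lt] using hτ
  let C : Set E := (fun z => τ • z) '' {z : E | ‖z‖ = 1 ∧ ⟪c, z⟫ < τ - r}
  have hC : IsPreconnected C := (isPreconnected_setOf_norm_eq_one_inner_lt hE c (τ - r)).image _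
    (continuous_const_smul τ).continuousOn
  have hCsub : C ⊆ ball (0 : E) R \ closedBall c r := by
    rintro _ ⟨z, ⟨hz, hzc⟩, rfl⟩
    exact ballSlice_subset hz c r R (smul_mem_ballSlice hz hτ₀.le hτR hzc)
  have hτC {z : E} (hz : ‖z‖ = 1) (hzc : ⟪c, z⟫ < τ - r) : τ • z ∈ C :=
    mem_image_of_mem _ ⟨hz, hzc⟩
  refine ⟨ballSlice c r R e ∪ C ∪ ballSlice c r R f, union_subset (union_subset
    (ballSlice_subset he c r R) hCsub) (ballSlice_subset hf c r R), Or.inl (Or.inl hxe),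
    Or.inr hyf, ?_⟩
  exact ((isPreconnected_ballSlice c r R e).union _ (smul_mem_ballSlice he hτ₀.le hτR hτe)
    (hτC he hτe) hC).union _ (Or.inr (hτC hf hτf))
    (smul_mem_ballSlice hf hτ₀.le hτR hτf) (isPreconnected_ballSlice c r R f)

end BallDiffBall

lemma reflection_orthogonal_span_singleton_apply {E : Type*} [NormedAddCommGroup E]
    [InnerProductSpace ℝ E] (a x : E) :
    (ℝ ∙ a)ᗮ.reflection x = x - (2 * ⟪a, x⟫ / ‖a‖ ^ 2) • a := by
  rw [Submodule.reflection_orthogonal_apply, Submodule.reflection_singleton_apply, neg_sub,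
    two_smul, ← add_smul, RCLike.ofReal_real_eq_id, id, ← two_mul, mul_div_assoc]

section EccentricAnnulus

variable {N : ℕ} {R₀ R₁ s : ℝ}

lemma IsFirstEigenfunction.isPositiveEigenfunction {p lam : ℝ}
    {Ω : Set (EuclideanSpace ℝ (Fin N))} {u : EuclideanSpace ℝ (Fin N) → ℝ}
    (hu : IsFirstEigenfunction p Ω lam u) (hb : Bornology.IsBounded Ω) (hp : 0 ≤ p) :
    IsPositiveEigenfunction p lam Ω volume u := by
  obtain ⟨⟨V, hV, hΩV, huV⟩, hpos, hzero, hweak⟩ := hu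
  have hgrad : ContinuousOn (fun x => ‖gradient u x‖ ^ p) (closure Ω) :=
    ((continuousOn_gradient hV huV).mono hΩV).norm.rpow_const fun _ _ => Or.inr hp
  refine ⟨huV.mono (subset_closure.trans hΩV), huV.continuousOn.mono hΩV, hpos, hzero,
    (hgrad.integrableOn_compact hb.isCompact_closure).mono_set subset_closure,
    fun φ hφ hc hφΩ => ?_⟩
  simpa only [pDual, real_inner_smul_left, mul_assoc, integral_const_mul] using hweak φ hφ hc hφΩ

lemma Om_eq_ball_diff_closedBall (hR₀ : R₀ ≠ 0) :
    Om N R₀ R₁ s = ball 0 R₁ \ closedBall (s • e1 N) R₀ := by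
  rw [Om, closure_ball _ hR₀]

lemma isOpen_Om : IsOpen (Om N R₀ R₁ s) := isOpen_ball.sdiff isClosed_closure

lemma isBounded_Om : Bornology.IsBounded (Om N R₀ R₁ s) := isBounded_ball.subset sdiff_subset

lemma isPreconnected_Om (hN : 2 ≤ N) (hR₀ : 0 < R₀) : IsPreconnected (Om N R₀ R₁ s) := by
  rw [Om_eq_ball_diff_closedBall hR₀.ne']
  refine isPreconnected_ball_diff_closedBall ?_ _ hR₀.le _
  rw [← Module.finrank_eq_rank, finrank_euclideanSpace_fin]
  exact_mod_cast hN

lemma preimage_Om {σ : EuclideanSpace ℝ (Fin N) ≃ₗᵢ[ℝ] EuclideanSpace ℝ (Fin N)}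
    (hR₀ : R₀ ≠ 0) (hσ : σ (e1 N) = e1 N) : σ ⁻¹' Om N R₀ R₁ s = Om N R₀ R₁ s := by
  ext x
  have hσx : σ x - s • e1 N = σ (x - s • e1 N) := by rw [map_sub, map_smul, hσ]
  rw [Om_eq_ball_diff_closedBall hR₀, mem_preimage, mem_ball_diff_closedBall_iff, hσx,
    σ.norm_map, σ.norm_map, mem_ball_diff_closedBall_iff]

end EccentricAnnulus

theorem stmt10_general (N : ℕ) (hN : 2 ≤ N) (R₀ R₁ : ℝ) (hR₀ : 0 < R₀) (p : ℝ) (hp : 1 < p)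
    (s lam : ℝ) (u : EuclideanSpace ℝ (Fin N) → ℝ)
    (hu : IsFirstEigenfunction p (Om N R₀ R₁ s) lam u) :
    (∀ a : EuclideanSpace ℝ (Fin N), a ≠ 0 → ⟪a, e1 N⟫ = 0 →
      ∀ x ∈ Om N R₀ R₁ s, u x = u (x - (2 * ⟪a, x⟫ / ‖a‖ ^ 2) • a)) ∧
    (∀ i : Fin N, (i : ℕ) ≠ 0 → ∀ x ∈ Om N R₀ R₁ s,
      u x = u (x - (2 * x i) • EuclideanSpace.single i 1)) := by
  have hu' := hu.isPositiveEigenfunction isBounded_Om (zero_lt_one.trans hp).le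
  have hreflection (a : EuclideanSpace ℝ (Fin N)) (ha : ⟪a, e1 N⟫ = 0)
      (x : EuclideanSpace ℝ (Fin N)) (hx : x ∈ Om N R₀ R₁ s) :
      u x = u (x - (2 * ⟪a, x⟫ / ‖a‖ ^ 2) • a) := by
    have hfix : (ℝ ∙ a)ᗮ.reflection (e1 N) = e1 N := by
      rw [reflection_orthogonal_span_singleton_apply, ha]
      simp
    rw [← reflection_orthogonal_span_singleton_apply]
    exact (hu'.comp_linearIsometryEquiv_eqOn isOpen_Om isBounded_Om (isPreconnected_Om hN hR₀) hp
      (preimage_Om hR₀.ne' hfix) hx).symm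
  refine ⟨fun a _ => hreflection a, fun i hi x hx => ?_⟩
  simpa [EuclideanSpace.inner_single_left] using hreflection (EuclideanSpace.single i 1)
    (by simp [EuclideanSpace.inner_single_left, e1, hi]) x hx

theorem stmt10 (N : ℕ) (hN : 2 ≤ N) (R₀ R₁ : ℝ) (hR₀ : 0 < R₀) (hR : R₀ < R₁)
    (p : ℝ) (hp : 1 < p) (s : ℝ) (hs : 0 < s) (hs' : s < R₁ - R₀)
    (u : EuclideanSpace ℝ (Fin N) → ℝ)
    (hu : IsFirstEigenfunction p (Om N R₀ R₁ s) (lam1 p (Om N R₀ R₁ s)) u) :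
    (∀ a : EuclideanSpace ℝ (Fin N), a ≠ 0 → ⟪a, e1 N⟫ = 0 →
      ∀ x ∈ Om N R₀ R₁ s, u x = u (x - (2 * ⟪a, x⟫ / ‖a‖ ^ 2) • a)) ∧
    (∀ i : Fin N, (i : ℕ) ≠ 0 → ∀ x ∈ Om N R₀ R₁ s,
      u x = u (x - (2 * x i) • EuclideanSpace.single i 1)) :=
  stmt10_general N hN R₀ R₁ hR₀ p hp s _ u hu
end

section
/- Let N ≥ 2, 0 < R₀ < R₁, p ∈ (1,∞), and let s₁, s₂ satisfy √(R₁² − R₀²) ≤ s₁ < s₂ ≤ R₁ + R₀. Then Ω_{s₁} is a proper subset of Ω_{s₂}, and λ₁(p, Ω_{s₂}) < λ₁(p, Ω_{s₁}). Consequently s ↦ λ₁(p, Ω_s) is strictly decreasing on [√(R₁² − R₀²), R₁ + R₀]. -/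
open MeasureTheory Metric Set Filter
open scoped RealInnerProductSpace ENNReal Topology

/-!
Suppose that enlarging `Ω'` to a connected open set `Ω` does not lower the first eigenvalue, and let
`u n ≥ 0` be `Lᵖ`-normalised near-minimisers on `Ω'`. They are then near-minimisers on `Ω`.

By hidden convexity the energy of `(uᵖ + wᵖ)^(1/p)` is at most the sum of the energies of `u` and
`w`. If `w` is a test function equal to `δ` on a ball in `Ω`, the energy lost there bounds
`δᵖ ∫ ‖∇ log (u + 2δ)‖ᵖ` over the ball, while minimality bounds it by the Rayleigh deficit of `u`
plus the energy of `w`, which is of order `δᵖ`. Hence, for each `δ`, the oscillation of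
`log (u n + 2δ)` under translations is bounded in `L¹`, for large `n`, independently of `δ`. For
small `δ` this forbids a jump from `u n ≤ δ` to `u n ≥ c` except on a set of small measure, so that
vanishing in measure near one point of `Ω` propagates from ball to ball through all of `Ω`.

The `u n` vanish on the nonempty open set `Ω \ closure Ω'`, so `u n → 0` in measure on `Ω`. By the
Sobolev inequality they are bounded in `L^q` for some `q > p`, and Vitali's theorem gives `u n → 0`
in `Lᵖ`, contradicting the normalisation.
-/

section MeasureTheory

variable {α ι F : Type*} [MeasurableSpace α] {μ : Measure α} [NormedAddCommGroup F]

lemma eLpNorm_le_eLpNorm_mul_rpow_measure_of_support_subset {f : α → F} {s : Set α} {p q : ℝ≥0∞}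
    (hpq : p ≤ q) (hf : AEStronglyMeasurable f μ) (hs : Function.support f ⊆ s) :
    eLpNorm f p μ ≤ eLpNorm f q μ * μ s ^ (1 / p.toReal - 1 / q.toReal) := by
  have h := eLpNorm_le_eLpNorm_mul_rpow_measure_univ hpq (hf.restrict (s := s))
  rwa [Measure.restrict_apply_univ, eLpNorm_restrict_eq_of_support_subset hs,
    eLpNorm_restrict_eq_of_support_subset hs] at h

lemma unifIntegrable_of_eLpNorm_le {f : ι → α → F} {p q C : ℝ≥0∞} (hp : p ≠ 0) (hpq : p < q)
    (hf : ∀ i, AEStronglyMeasurable (f i) μ) (hC : C ≠ ∞) (hfC : ∀ i, eLpNorm (f i) q μ ≤ C) :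
    UnifIntegrable f p μ := by
  set θ : ℝ := 1 / p.toReal - 1 / q.toReal with hθ
  have hθ_pos : 0 < θ := by
    have hp_pos : 0 < p.toReal := ENNReal.toReal_pos hp hpq.ne_top
    rcases eq_or_ne q ∞ with rfl | hq
    · simpa [hθ] using hp_pos
    · exact sub_pos.2 (one_div_lt_one_div_of_lt hp_pos
        ((ENNReal.toReal_lt_toReal hpq.ne_top hq).2 hpq))
  have hlim : Tendsto (fun δ : ℝ => C * ENNReal.ofReal δ ^ θ) (𝓝[>] 0) (𝓝 0) := by
    have h : Tendsto (fun δ : ℝ => ENNReal.ofReal δ ^ θ) (𝓝[>] 0) (𝓝 0) := by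
      have hcont : Continuous fun δ : ℝ => ENNReal.ofReal δ ^ θ :=
        ENNReal.continuous_rpow_const.comp ENNReal.continuous_ofReal
      simpa [ENNReal.zero_rpow_of_pos hθ_pos] using
        (hcont.tendsto 0).mono_left nhdsWithin_le_nhds
    simpa using ENNReal.Tendsto.const_mul h (Or.inr hC)
  intro ε hε
  obtain ⟨δ, hδε, hδ⟩ := ((hlim.eventually_le_const (ENNReal.ofReal_pos.2 hε)).and
    self_mem_nhdsWithin).exists
  refine ⟨δ, hδ, fun i s hs hμs => ?_⟩
  calc eLpNorm (s.indicator (f i)) p μ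
      ≤ eLpNorm (s.indicator (f i)) q μ * μ s ^ θ :=
      eLpNorm_le_eLpNorm_mul_rpow_measure_of_support_subset hpq.le ((hf i).indicator hs)
        Set.support_indicator_subset
    _ ≤ C * ENNReal.ofReal δ ^ θ := by
      gcongr
      exact (eLpNorm_indicator_le _).trans (hfC i)
    _ ≤ ENNReal.ofReal ε := hδε

lemma tendstoInMeasure_of_ae_eq {E : Type*} [PseudoEMetricSpace E] {f : ι → α → E} {g : α → E}
    {l : Filter ι} (h : ∀ i, f i =ᵐ[μ] g) : TendstoInMeasure μ f l g := by
  have hconst : TendstoInMeasure μ (fun _ : ι => g) l g := fun ε hε => by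
    simpa [not_le_of_gt hε] using tendsto_const_nhds
  exact hconst.congr_left fun i => (h i).symm

lemma tendstoInMeasure_mono_measure {ν : Measure α} {E : Type*} [EDist E] {f : ι → α → E}
    {g : α → E} {l : Filter ι} (h : TendstoInMeasure μ f l g) (hν : ν ≤ μ) :
    TendstoInMeasure ν f l g := fun ε hε =>
  tendsto_of_tendsto_of_tendsto_of_le_of_le tendsto_const_nhds (h ε hε) (fun _ => zero_le)
    fun _ => hν _

lemma tendstoInMeasure_restrict_of_forall_mem_nhds [TopologicalSpace α] [T2Space α]
    [OpensMeasurableSpace α] [μ.InnerRegularCompactLTTop] {E : Type*} [EDist E] {f : ι → α → E}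
    {g : α → E} {l : Filter ι} {Ω : Set α} (hΩ : MeasurableSet Ω) (hμΩ : μ Ω ≠ ∞)
    (h : ∀ x ∈ Ω, ∃ s ∈ 𝓝 x, TendstoInMeasure (μ.restrict s) f l g) :
    TendstoInMeasure (μ.restrict Ω) f l g := by
  intro ε hε
  set A : ι → Set α := fun i => {x | ε ≤ edist (f i x) (g x)}
  rw [ENNReal.tendsto_nhds_zero]
  intro θ hθ
  obtain ⟨K, hKΩ, hK, hKm⟩ :=
    hΩ.exists_isCompact_sdiff_lt hμΩ (ENNReal.half_pos hθ.ne').ne'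
  choose! s hs hgood using h
  obtain ⟨t, htK, hcov⟩ := hK.elim_nhds_subcover s fun x hx => hs x (hKΩ hx)
  have hsum : Tendsto (fun i => ∑ x ∈ t, μ.restrict (s x) (A i)) l (𝓝 0) := by
    simpa using tendsto_finsetSum t fun x hx => hgood x (hKΩ (htK x hx)) ε hε
  filter_upwards [ENNReal.tendsto_nhds_zero.1 hsum (θ / 2) (ENNReal.half_pos hθ.ne')] with i hi
  have hcov' : A i ∩ Ω ⊆ (⋃ x ∈ t, A i ∩ s x) ∪ Ω \ K := fun y hy => by
    by_cases hyK : y ∈ K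
    · exact .inl (by simpa [hy.1] using hcov hyK)
    · exact .inr ⟨hy.2, hyK⟩
  calc μ.restrict Ω (A i)
      = μ (A i ∩ Ω) := Measure.restrict_apply' hΩ
    _ ≤ (∑ x ∈ t, μ (A i ∩ s x)) + μ (Ω \ K) :=
      (measure_mono hcov').trans ((measure_union_le _ _).trans
        (add_le_add_left (measure_biUnion_finset_le _ _) _))
    _ ≤ (∑ x ∈ t, μ.restrict (s x) (A i)) + μ (Ω \ K) :=
      add_le_add_left (Finset.sum_le_sum fun x _ => Measure.le_restrict_apply _ _) _
    _ ≤ θ / 2 + θ / 2 := add_le_add hi hKm.le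
    _ = θ := ENNReal.add_halves θ

lemma eLpNorm_ofReal_eq {f : α → F} {p : ℝ} (hp : 0 < p) (hf : MemLp f (ENNReal.ofReal p) μ) :
    eLpNorm f (ENNReal.ofReal p) μ = ENNReal.ofReal ((∫ x, ‖f x‖ ^ p ∂μ) ^ p⁻¹) := by
  rw [hf.eLpNorm_eq_integral_rpow_norm (ENNReal.ofReal_pos.2 hp).ne' ENNReal.ofReal_ne_top,
    ENNReal.toReal_ofReal hp.le]

lemma lintegral_enorm_le_measureReal_add_integral_rpow [IsFiniteMeasure μ] {f : α → F} {p : ℝ}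
    (hp : 1 ≤ p) (hf : Integrable (fun x => ‖f x‖ ^ p) μ) :
    ∫⁻ x, ‖f x‖ₑ ∂μ ≤ ENNReal.ofReal (μ.real univ + ∫ x, ‖f x‖ ^ p ∂μ) := by
  have hle : ∀ t : ℝ, 0 ≤ t → t ≤ 1 + t ^ p := fun t ht => by
    rcases le_total t 1 with h | h
    · linarith [Real.rpow_nonneg ht p]
    · linarith [Real.self_le_rpow_of_one_le h hp]
  calc ∫⁻ x, ‖f x‖ₑ ∂μ
      ≤ ∫⁻ x, ENNReal.ofReal (1 + ‖f x‖ ^ p) ∂μ := lintegral_mono fun x => by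
        rw [← ofReal_norm]
        exact ENNReal.ofReal_le_ofReal (hle _ (norm_nonneg _))
    _ = ENNReal.ofReal (∫ x, (1 + ‖f x‖ ^ p) ∂μ) :=
        (ofReal_integral_eq_lintegral_ofReal ((integrable_const 1).add hf)
          (.of_forall fun x => add_nonneg zero_le_one (by positivity))).symm
    _ = ENNReal.ofReal (μ.real univ + ∫ x, ‖f x‖ ^ p ∂μ) := by
        rw [integral_add (integrable_const 1) hf]
        simp

lemma tendstoInMeasure_zero_iff_of_nonneg {l : Filter ι} {f : ι → α → ℝ}
    (hf : ∀ i x, 0 ≤ f i x) :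
    TendstoInMeasure μ f l 0 ↔ ∀ ε, 0 < ε → Tendsto (fun i => μ {x | ε ≤ f i x}) l (𝓝 0) := by
  simp [tendstoInMeasure_iff_norm, abs_of_nonneg (hf _ _)]

lemma measure_restrict_ball_ge_le {E : Type*} [NormedAddCommGroup E] [MeasurableSpace E]
    [BorelSpace E] {μ : Measure E} [μ.IsAddRightInvariant] (u : E → ℝ) (c δ : ℝ) (a x : E)
    (ρ : ℝ) :
    μ.restrict (ball x ρ) {y | c ≤ u y} ≤
      μ.restrict (ball x ρ) {y | c ≤ u y ∧ u (y + (a - x)) ≤ δ} +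
        μ.restrict (ball a ρ) {y | δ ≤ u y} := by
  have htranslate : μ.restrict (ball a ρ) {y | δ ≤ u y} =
      μ.restrict (ball x ρ) ((· + (a - x)) ⁻¹' {y | δ ≤ u y}) := by
    rw [Measure.restrict_apply' measurableSet_ball, Measure.restrict_apply' measurableSet_ball,
      ← measure_preimage_add_right μ (a - x), preimage_inter, preimage_add_right_ball,
      sub_sub_cancel]
  rw [htranslate]
  refine (measure_mono fun y hy => ?_).trans (measure_union_le _ _)
  exact (le_total (u (y + (a - x))) δ).imp (⟨hy, ·⟩) id

lemma tendsto_integral_norm_rpow_comp {φ : ι → F → F} {u : α → F} {l : Filter ι}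
    [l.IsCountablyGenerated] {p : ℝ} (hp : 0 ≤ p) (hu : AEStronglyMeasurable u μ)
    (hup : Integrable (fun x => ‖u x‖ ^ p) μ) (hφ : ∀ i, Continuous (φ i))
    (hφ_le : ∀ᶠ i in l, ∀ t, ‖φ i t‖ ≤ ‖t‖) (hφ_lim : ∀ t, Tendsto (fun i => ‖φ i t‖) l (𝓝 ‖t‖)) :
    Tendsto (fun i => ∫ x, ‖φ i (u x)‖ ^ p ∂μ) l (𝓝 (∫ x, ‖u x‖ ^ p ∂μ)) := by
  refine tendsto_integral_filter_of_dominated_convergence (fun x => ‖u x‖ ^ p)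
    (.of_forall fun i => ?_) ?_ hup (.of_forall fun x => ?_)
  · exact ((hφ i).norm.rpow_const fun _ => .inr hp).comp_aestronglyMeasurable hu
  · filter_upwards [hφ_le] with i hi
    refine .of_forall fun x => ?_
    rw [Real.norm_of_nonneg (by positivity)]
    exact Real.rpow_le_rpow (norm_nonneg _) (hi _) hp
  · exact (hφ_lim (u x)).rpow_const (.inr hp)

end MeasureTheory

section HiddenConvexity

variable {F : Type*} [NormedAddCommGroup F] [NormedSpace ℝ F] {p α β : ℝ} {a b : F}

lemma one_sub_rpow_le {x q : ℝ} (hx₀ : 0 ≤ x) (hx₁ : x ≤ 1) (hq : 0 ≤ q) :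
    (1 - x) ^ q ≤ 1 - min 1 q * x := by
  rcases le_total 1 q with h | h
  · have := Real.rpow_le_rpow_of_exponent_ge' (sub_nonneg.2 hx₁) (sub_le_self 1 hx₀) zero_le_one h
    rw [min_eq_left h, one_mul]
    simpa using this
  · have := rpow_one_add_le_one_add_mul_self (neg_le_neg hx₁) hq h
    rw [min_eq_right h]
    simpa only [sub_eq_add_neg, mul_neg] using this

lemma norm_rpow_smul_add_rpow_smul_le (hp : 1 ≤ p) (hα : 0 < α) (hβ : 0 < β)
    (hαβ : α ^ p + β ^ p = 1) :
    ‖α ^ (p - 1) • a + β ^ (p - 1) • b‖ ^ p ≤ ‖a‖ ^ p + ‖b‖ ^ p := by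
  have hweight : ∀ {γ : ℝ}, 0 < γ → ∀ c : F,
      ‖γ ^ (p - 1) • c‖ = γ ^ p * (‖c‖ / γ) ∧ γ ^ p * (‖c‖ / γ) ^ p = ‖c‖ ^ p := by
    intro γ hγ c
    have hγp : γ ^ p ≠ 0 := (Real.rpow_pos_of_pos hγ p).ne'
    constructor
    · rw [norm_smul, Real.norm_of_nonneg (by positivity), Real.rpow_sub_one hγ.ne']
      ring
    · rw [Real.div_rpow (norm_nonneg c) hγ.le]
      field_simp
  have hconv := (convexOn_rpow hp).2 (mem_Ici.2 (by positivity : 0 ≤ ‖a‖ / α))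
    (mem_Ici.2 (by positivity : 0 ≤ ‖b‖ / β)) (by positivity) (by positivity) hαβ
  simp only [smul_eq_mul] at hconv
  calc ‖α ^ (p - 1) • a + β ^ (p - 1) • b‖ ^ p
      ≤ (α ^ p * (‖a‖ / α) + β ^ p * (‖b‖ / β)) ^ p := by
        rw [← (hweight hα a).1, ← (hweight hβ b).1]
        exact Real.rpow_le_rpow (norm_nonneg _) (norm_add_le _ _) (by linarith)
    _ ≤ α ^ p * (‖a‖ / α) ^ p + β ^ p * (‖b‖ / β) ^ p := hconv
    _ = ‖a‖ ^ p + ‖b‖ ^ p := by rw [(hweight hα a).2, (hweight hβ b).2]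

lemma norm_rpow_smul_rpow_le (hp : 1 ≤ p) (hα : 0 ≤ α) (hβ : 0 ≤ β) (hαβ : α ^ p + β ^ p = 1) :
    ‖α ^ (p - 1) • a‖ ^ p ≤ (1 - min 1 (p - 1) * β ^ p) * ‖a‖ ^ p := by
  have hαp : 0 ≤ α ^ p := Real.rpow_nonneg hα p
  rw [norm_smul, Real.norm_of_nonneg (by positivity), Real.mul_rpow (by positivity) (norm_nonneg _),
    ← Real.rpow_mul hα, mul_comm (p - 1), Real.rpow_mul hα, eq_sub_of_add_eq hαβ]
  gcongr
  exact one_sub_rpow_le (by positivity) (by linarith) (by linarith)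

end HiddenConvexity

section Translation

variable {E F : Type*} [NormedAddCommGroup E] [NormedSpace ℝ E] [NormedAddCommGroup F]
  [NormedSpace ℝ F] [CompleteSpace F]

lemma enorm_sub_translate_le {g : E → F} (hg : ContDiff ℝ 1 g) (y v : E) :
    ‖g (y + v) - g y‖ₑ ≤ ∫⁻ t in Icc (0 : ℝ) 1, ‖v‖ₑ * ‖fderiv ℝ g (y + t • v)‖ₑ := by
  have hcont : Continuous fun t : ℝ => fderiv ℝ g (y + t • v) v :=
    ((hg.continuous_fderiv one_ne_zero).comp (by fun_prop)).clm_apply continuous_const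
  have hderiv : ∀ t : ℝ, HasDerivAt (fun t : ℝ => g (y + t • v)) (fderiv ℝ g (y + t • v) v) t := by
    intro t
    have hline : HasDerivAt (fun t : ℝ => y + t • v) v t := by
      simpa using ((hasDerivAt_id t).smul_const v).const_add y
    exact (hg.differentiable one_ne_zero _).hasFDerivAt.comp_hasDerivAt t hline
  have hftc := intervalIntegral.integral_eq_sub_of_hasDerivAt (a := 0) (b := 1)
    (fun t _ => hderiv t) (hcont.intervalIntegrable 0 1)
  simp only [one_smul, zero_smul, add_zero] at hftc
  rw [← hftc, intervalIntegral.integral_of_le zero_le_one, ← restrict_Ioc_eq_restrict_Icc]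
  refine (enorm_integral_le_lintegral_enorm _).trans (lintegral_mono fun t => ?_)
  exact ((fderiv ℝ g (y + t • v)).le_opENorm v).trans_eq (mul_comm _ _)

lemma setLIntegral_enorm_sub_translate_le [MeasurableSpace E] [BorelSpace E]
    {μ : Measure E} [SFinite μ] [μ.IsAddRightInvariant] {g : E → F}
    (hg : ContDiff ℝ 1 g) (v : E) {S K : Set E}
    (hSK : ∀ y ∈ S, ∀ t ∈ Icc (0 : ℝ) 1, y + t • v ∈ K) :
    ∫⁻ y in S, ‖g (y + v) - g y‖ₑ ∂μ ≤ ‖v‖ₑ * ∫⁻ y in K, ‖fderiv ℝ g y‖ₑ ∂μ := by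
  have hcont : Continuous fun z : E × ℝ => ‖fderiv ℝ g (z.1 + z.2 • v)‖ₑ :=
    ((hg.continuous_fderiv one_ne_zero).comp (by fun_prop)).enorm
  have htranslate : ∀ t ∈ Icc (0 : ℝ) 1,
      ∫⁻ y in S, ‖fderiv ℝ g (y + t • v)‖ₑ ∂μ ≤ ∫⁻ y in K, ‖fderiv ℝ g y‖ₑ ∂μ := fun t ht =>
    (lintegral_mono_set (t := (· + t • v) ⁻¹' K) fun y hy => hSK y hy t ht).trans_eq
      ((measurePreserving_add_right μ (t • v)).setLIntegral_comp_preimage_emb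
        (MeasurableEquiv.addRight (t • v)).measurableEmbedding (‖fderiv ℝ g ·‖ₑ) K)
  calc ∫⁻ y in S, ‖g (y + v) - g y‖ₑ ∂μ
      ≤ ∫⁻ y in S, (∫⁻ t in Icc (0 : ℝ) 1, ‖v‖ₑ * ‖fderiv ℝ g (y + t • v)‖ₑ) ∂μ :=
        lintegral_mono fun y => enorm_sub_translate_le hg y v
    _ = ∫⁻ t in Icc (0 : ℝ) 1, (∫⁻ y in S, ‖v‖ₑ * ‖fderiv ℝ g (y + t • v)‖ₑ ∂μ) :=
        lintegral_lintegral_swap (hcont.measurable.const_mul _).aemeasurable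
    _ ≤ ∫⁻ _ in Icc (0 : ℝ) 1, ‖v‖ₑ * ∫⁻ y in K, ‖fderiv ℝ g y‖ₑ ∂μ := by
        refine setLIntegral_mono measurable_const fun t ht => ?_
        rw [lintegral_const_mul' _ _ enorm_ne_top]
        exact mul_le_mul_right (htranslate t ht) _
    _ = ‖v‖ₑ * ∫⁻ y in K, ‖fderiv ℝ g y‖ₑ ∂μ := by simp

end Translation

section TestFunctions

/-- `u` is an admissible competitor in the variational definition of the first Dirichlet
eigenvalue of `Ω`: a smooth real function with compact support contained in `Ω`. -/
structure IsTestFunction {E : Type*} [NormedAddCommGroup E] [NormedSpace ℝ E] (Ω : Set E)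
    (u : E → ℝ) : Prop where
  contDiff : ContDiff ℝ (⊤ : ℕ∞) u
  hasCompactSupport : HasCompactSupport u
  tsupport_subset : tsupport u ⊆ Ω

namespace IsTestFunction

variable {E : Type*} [NormedAddCommGroup E] [NormedSpace ℝ E] {Ω Ω' : Set E} {u : E → ℝ}

lemma mono (hu : IsTestFunction Ω u) (h : Ω ⊆ Ω') : IsTestFunction Ω' u :=
  ⟨hu.contDiff, hu.hasCompactSupport, hu.tsupport_subset.trans h⟩

lemma differentiable (hu : IsTestFunction Ω u) : Differentiable ℝ u :=
  hu.contDiff.differentiable (by simp)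

lemma continuous_fderiv (hu : IsTestFunction Ω u) : Continuous (fderiv ℝ u) :=
  hu.contDiff.continuous_fderiv (by simp)

lemma eq_zero_of_notMem (hu : IsTestFunction Ω u) {x : E} (hx : x ∉ Ω) : u x = 0 :=
  image_eq_zero_of_notMem_tsupport fun h => hx (hu.tsupport_subset h)

lemma fderiv_eq_zero_of_notMem (hu : IsTestFunction Ω u) {x : E} (hx : x ∉ Ω) :
    fderiv ℝ u x = 0 :=
  Function.notMem_support.1 fun h => hx (hu.tsupport_subset (support_fderiv_subset ℝ h))

lemma comp_left (hu : IsTestFunction Ω u) {φ : ℝ → ℝ} (hφ : ContDiff ℝ (⊤ : ℕ∞) φ)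
    (hφ₀ : φ 0 = 0) : IsTestFunction Ω (φ ∘ u) where
  contDiff := hφ.comp hu.contDiff
  hasCompactSupport := hu.hasCompactSupport.comp_left hφ₀
  tsupport_subset := (tsupport_comp_subset hφ₀ u).trans hu.tsupport_subset

lemma const_mul (hu : IsTestFunction Ω u) (c : ℝ) : IsTestFunction Ω fun x => c * u x :=
  hu.comp_left (contDiff_const.mul contDiff_id) (mul_zero c)

lemma norm_fderiv_comp_le (hu : IsTestFunction Ω u) {φ : ℝ → ℝ} (hφ : Differentiable ℝ φ)
    (hφ' : ∀ t, ‖deriv φ t‖ ≤ 1) (x : E) : ‖fderiv ℝ (φ ∘ u) x‖ ≤ ‖fderiv ℝ u x‖ := by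
  rw [((hφ _).hasDerivAt.comp_hasFDerivAt x (hu.differentiable x).hasFDerivAt).fderiv, norm_smul]
  exact mul_le_of_le_one_left (norm_nonneg _) (hφ' _)

section Integral

variable [MeasurableSpace E] [OpensMeasurableSpace E] {μ : Measure E} [IsFiniteMeasureOnCompacts μ]
  {p : ℝ}

lemma integrable_norm_rpow (hu : IsTestFunction Ω u) (hp : 0 < p) :
    Integrable (fun x => ‖u x‖ ^ p) μ :=
  (hu.contDiff.continuous.norm.rpow_const fun _ => .inr hp.le).integrable_of_hasCompactSupport
    (hu.hasCompactSupport.comp_left (g := fun t => ‖t‖ ^ p) (by simp [hp.ne']))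

lemma integrable_norm_fderiv_rpow (hu : IsTestFunction Ω u) (hp : 0 < p) :
    Integrable (fun x => ‖fderiv ℝ u x‖ ^ p) μ :=
  (hu.continuous_fderiv.norm.rpow_const fun _ => .inr hp.le).integrable_of_hasCompactSupport
    ((hu.hasCompactSupport.fderiv (𝕜 := ℝ)).comp_left (g := fun t => ‖t‖ ^ p) (by simp [hp.ne']))

lemma integral_norm_rpow_pos [μ.IsOpenPosMeasure] (hu : IsTestFunction Ω u) (hu₀ : u ≠ 0)
    (hp : 0 < p) : 0 < ∫ x, ‖u x‖ ^ p ∂μ := by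
  obtain ⟨x, hx⟩ := Function.ne_iff.1 hu₀
  exact integral_pos_of_integrable_nonneg_nonzero
    (hu.contDiff.continuous.norm.rpow_const fun _ => .inr hp.le)
    (hu.integrable_norm_rpow hp) (fun _ => by positivity)
    (Real.rpow_pos_of_pos (norm_pos_iff.2 hx) p).ne'

end Integral

end IsTestFunction

lemma exists_isTestFunction_ne_zero {E : Type*} [NormedAddCommGroup E] [NormedSpace ℝ E]
    [FiniteDimensional ℝ E] {Ω : Set E} (hΩ : IsOpen Ω) (hne : Ω.Nonempty) :
    ∃ u : E → ℝ, IsTestFunction Ω u ∧ u ≠ 0 := by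
  obtain ⟨x, hx⟩ := hne
  obtain ⟨u, huΩ, huc, hu, -, hux⟩ := exists_contDiff_tsupport_subset (n := ⊤) (hΩ.mem_nhds hx)
  exact ⟨u, ⟨hu, huc, huΩ⟩, fun h => by simp [h] at hux⟩

end TestFunctions

section Rayleigh

variable {E : Type*} [NormedAddCommGroup E] [NormedSpace ℝ E] [MeasurableSpace E] {μ : Measure E}
  {p : ℝ} {Ω : Set E} {u : E → ℝ}

/-- The Rayleigh quotient of `u` for the `p`-Laplacian and the reference measure `μ`. -/
noncomputable def rayleighQuotient (μ : Measure E) (p : ℝ) (u : E → ℝ) : ℝ :=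
  (∫ x, ‖fderiv ℝ u x‖ ^ p ∂μ) / ∫ x, ‖u x‖ ^ p ∂μ

/-- The first Dirichlet eigenvalue of the `p`-Laplacian on `Ω` in a normed space with reference
measure `μ`. It agrees with `lam1` in Euclidean space; integrals run over the whole space, since
test functions vanish off `Ω`. -/
noncomputable def rayleighInf (μ : Measure E) (p : ℝ) (Ω : Set E) : ℝ :=
  sInf (rayleighQuotient μ p '' {u | IsTestFunction Ω u ∧ u ≠ 0})

/-- How far `u` is from being a minimiser of the Rayleigh quotient on `Ω`, on the scale of the
energy rather than of the quotient. -/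
noncomputable def rayleighDeficit (μ : Measure E) (p : ℝ) (Ω : Set E) (u : E → ℝ) : ℝ :=
  (∫ x, ‖fderiv ℝ u x‖ ^ p ∂μ) - rayleighInf μ p Ω * ∫ x, ‖u x‖ ^ p ∂μ

lemma rayleighQuotient_nonneg (μ : Measure E) (p : ℝ) (u : E → ℝ) : 0 ≤ rayleighQuotient μ p u :=
  div_nonneg (integral_nonneg fun _ => by positivity) (integral_nonneg fun _ => by positivity)

lemma rayleighInf_nonneg (μ : Measure E) (p : ℝ) (Ω : Set E) : 0 ≤ rayleighInf μ p Ω :=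
  Real.sInf_nonneg (forall_mem_image.2 fun u _ => rayleighQuotient_nonneg μ p u)

variable [OpensMeasurableSpace E] [IsFiniteMeasureOnCompacts μ] [μ.IsOpenPosMeasure]

lemma rayleighInf_mul_integral_le (hp : 0 < p) (hu : IsTestFunction Ω u) :
    rayleighInf μ p Ω * ∫ x, ‖u x‖ ^ p ∂μ ≤ ∫ x, ‖fderiv ℝ u x‖ ^ p ∂μ := by
  rcases eq_or_ne u 0 with rfl | hu₀
  · simp [hp.ne']
  rw [← le_div_iff₀ (hu.integral_norm_rpow_pos hu₀ hp)]
  exact csInf_le ⟨0, forall_mem_image.2 fun v _ => rayleighQuotient_nonneg μ p v⟩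
    (mem_image_of_mem _ ⟨hu, hu₀⟩)

variable [FiniteDimensional ℝ E]

lemma exists_integral_norm_fderiv_rpow_lt (hp : 0 < p) (hΩ : IsOpen Ω) (hne : Ω.Nonempty) {l : ℝ}
    (hl : rayleighInf μ p Ω < l) :
    ∃ u, IsTestFunction Ω u ∧ ∫ x, ‖fderiv ℝ u x‖ ^ p ∂μ < l * ∫ x, ‖u x‖ ^ p ∂μ := by
  have hset : {u | IsTestFunction Ω u ∧ u ≠ 0}.Nonempty := exists_isTestFunction_ne_zero hΩ hne
  obtain ⟨_, ⟨u, ⟨hu, hu₀⟩, rfl⟩, hul⟩ := exists_lt_of_csInf_lt (hset.image _) hl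
  exact ⟨u, hu, (div_lt_iff₀ (hu.integral_norm_rpow_pos hu₀ hp)).1 hul⟩

/-- A smooth approximation of `|t|` vanishing at `0`, used to replace near-minimisers of the
Rayleigh quotient by nonnegative ones. -/
noncomputable def smoothAbs (κ t : ℝ) : ℝ := √(t ^ 2 + κ ^ 2) - κ

lemma contDiff_smoothAbs {κ : ℝ} (hκ : κ ≠ 0) : ContDiff ℝ (⊤ : ℕ∞) (smoothAbs κ) :=
  (((contDiff_id.pow 2).add contDiff_const).sqrt fun t => by positivity).sub contDiff_const

lemma continuous_smoothAbs (κ : ℝ) : Continuous (smoothAbs κ) := by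
  unfold smoothAbs
  fun_prop

lemma smoothAbs_zero_right {κ : ℝ} (hκ : 0 ≤ κ) : smoothAbs κ 0 = 0 := by
  simp [smoothAbs, Real.sqrt_sq hκ]

lemma smoothAbs_nonneg (κ t : ℝ) : 0 ≤ smoothAbs κ t :=
  sub_nonneg.2 (Real.le_sqrt_of_sq_le (by nlinarith [sq_nonneg t]))

lemma smoothAbs_le_abs {κ : ℝ} (hκ : 0 ≤ κ) (t : ℝ) : smoothAbs κ t ≤ |t| := by
  rw [smoothAbs, sub_le_iff_le_add, Real.sqrt_le_left (by positivity)]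
  nlinarith [sq_abs t, abs_nonneg t]

lemma tendsto_smoothAbs (t : ℝ) : Tendsto (smoothAbs · t) (𝓝 0) (𝓝 |t|) := by
  have hcont : Continuous (smoothAbs · t) := by
    unfold smoothAbs
    fun_prop
  simpa [smoothAbs, Real.sqrt_sq_eq_abs] using hcont.tendsto 0

lemma norm_deriv_smoothAbs_le {κ : ℝ} (hκ : κ ≠ 0) (t : ℝ) : ‖deriv (smoothAbs κ) t‖ ≤ 1 := by
  have hpos : 0 < t ^ 2 + κ ^ 2 := by positivity
  have hderiv : deriv (smoothAbs κ) t = t / √(t ^ 2 + κ ^ 2) := by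
    have h := ((((hasDerivAt_id t).pow 2).add_const (κ ^ 2)).sqrt hpos.ne').sub_const κ
    refine h.deriv.trans ?_
    simp [field]
  rw [hderiv, norm_div, Real.norm_of_nonneg (Real.sqrt_nonneg _)]
  exact div_le_one_of_le₀ (Real.abs_le_sqrt (by nlinarith)) (Real.sqrt_nonneg _)

lemma exists_nonneg_integral_norm_fderiv_rpow_lt (hp : 0 < p) (hΩ : IsOpen Ω) (hne : Ω.Nonempty)
    {l : ℝ} (hl : rayleighInf μ p Ω < l) :
    ∃ u, IsTestFunction Ω u ∧ (∀ x, 0 ≤ u x) ∧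
      ∫ x, ‖fderiv ℝ u x‖ ^ p ∂μ < l * ∫ x, ‖u x‖ ^ p ∂μ := by
  obtain ⟨u, hu, hul⟩ := exists_integral_norm_fderiv_rpow_lt hp hΩ hne hl
  have hlim : Tendsto (fun κ => ∫ x, ‖smoothAbs κ (u x)‖ ^ p ∂μ) (𝓝[>] 0)
      (𝓝 (∫ x, ‖u x‖ ^ p ∂μ)) := by
    refine tendsto_integral_norm_rpow_comp hp.le
      hu.contDiff.continuous.aestronglyMeasurable (hu.integrable_norm_rpow hp) continuous_smoothAbs
      ?_ fun t => ?_
    · filter_upwards [self_mem_nhdsWithin] with κ hκ t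
      rw [Real.norm_of_nonneg (smoothAbs_nonneg κ t)]
      exact smoothAbs_le_abs (le_of_lt hκ) t
    · simpa using ((tendsto_smoothAbs t).norm).mono_left nhdsWithin_le_nhds
  obtain ⟨κ, hκl, hκ⟩ :=
    (((hlim.const_mul l).eventually (lt_mem_nhds hul)).and self_mem_nhdsWithin).exists
  have hκ₀ : κ ≠ 0 := ne_of_gt hκ
  have hv : IsTestFunction Ω (smoothAbs κ ∘ u) :=
    hu.comp_left (contDiff_smoothAbs hκ₀) (smoothAbs_zero_right (le_of_lt hκ))
  refine ⟨smoothAbs κ ∘ u, hv, fun x => smoothAbs_nonneg κ _, lt_of_le_of_lt ?_ hκl⟩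
  refine integral_mono (hv.integrable_norm_fderiv_rpow hp) (hu.integrable_norm_fderiv_rpow hp)
    fun x => Real.rpow_le_rpow (norm_nonneg _) ?_ hp.le
  exact hu.norm_fderiv_comp_le ((contDiff_smoothAbs hκ₀).differentiable (by simp))
    (norm_deriv_smoothAbs_le hκ₀) x

lemma exists_nonneg_normalized_integral_norm_fderiv_rpow_lt (hp : 0 < p) (hΩ : IsOpen Ω)
    (hne : Ω.Nonempty) {l : ℝ} (hl : rayleighInf μ p Ω < l) :
    ∃ u, IsTestFunction Ω u ∧ (∀ x, 0 ≤ u x) ∧ ∫ x, ‖u x‖ ^ p ∂μ = 1 ∧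
      ∫ x, ‖fderiv ℝ u x‖ ^ p ∂μ < l := by
  obtain ⟨u, hu, hu_nonneg, hul⟩ := exists_nonneg_integral_norm_fderiv_rpow_lt hp hΩ hne hl
  set I := ∫ x, ‖u x‖ ^ p ∂μ
  have hI : 0 < I := by
    refine pos_of_mul_pos_right (lt_of_le_of_lt ?_ hul) ((rayleighInf_nonneg μ p Ω).trans hl.le)
    exact integral_nonneg fun _ => by positivity
  set c : ℝ := I ^ (-p⁻¹)
  have hc : 0 ≤ c := Real.rpow_nonneg hI.le _
  have hcp : c ^ p = I⁻¹ := by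
    rw [← Real.rpow_mul hI.le, neg_mul, inv_mul_cancel₀ hp.ne', Real.rpow_neg_one]
  have hfderiv : ∀ x, fderiv ℝ (fun x => c * u x) x = c • fderiv ℝ u x := fun x =>
    fderiv_const_mul (hu.differentiable x) c
  refine ⟨fun x => c * u x, hu.const_mul c, fun x => mul_nonneg hc (hu_nonneg x), ?_, ?_⟩
  · simp_rw [norm_mul, Real.norm_of_nonneg hc, Real.mul_rpow hc (norm_nonneg _)]
    rw [integral_const_mul, hcp, inv_mul_cancel₀ hI.ne']
  · simp_rw [hfderiv, norm_smul, Real.norm_of_nonneg hc, Real.mul_rpow hc (norm_nonneg _)]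
    rwa [integral_const_mul, hcp, inv_mul_lt_iff₀ hI, mul_comm]

end Rayleigh

lemma lam1_eq_rayleighInf {N : ℕ} {p : ℝ} (hp : p ≠ 0) (Ω : Set (EuclideanSpace ℝ (Fin N))) :
    lam1 p Ω = rayleighInf volume p Ω := by
  have hquot : ∀ u, IsTestFunction Ω u → rayleighQuotient volume p u =
      (∫ x in Ω, ‖gradient u x‖ ^ p) / ∫ x in Ω, |u x| ^ p := by
    intro u hu
    rw [rayleighQuotient, setIntegral_eq_integral_of_forall_compl_eq_zero,
      setIntegral_eq_integral_of_forall_compl_eq_zero]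
    · simp [gradient]
    · intro x hx
      simp [hu.eq_zero_of_notMem hx, hp]
    · intro x hx
      simp [gradient, hu.fderiv_eq_zero_of_notMem hx, hp]
  unfold lam1 rayleighInf
  congr 1
  ext r
  constructor
  · rintro ⟨u, hu, hu₀, huc, hus, rfl⟩
    exact ⟨u, ⟨⟨hu, huc, hus⟩, hu₀⟩, hquot u ⟨hu, huc, hus⟩⟩
  · rintro ⟨u, ⟨hu, hu₀⟩, rfl⟩
    exact ⟨u, hu.contDiff, hu₀, hu.hasCompactSupport, hu.tsupport_subset, hquot u hu⟩

section LpSum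

variable {p a b : ℝ}

/-- The `ℓ^p` norm of the pair `(a, b)`, for nonnegative `a` and `b`. -/
noncomputable def lpSum (p a b : ℝ) : ℝ := (a ^ p + b ^ p) ^ p⁻¹

lemma lpSum_pos (ha : 0 < a) (hb : 0 < b) : 0 < lpSum p a b := by
  unfold lpSum
  positivity

lemma lpSum_rpow (hp : p ≠ 0) (ha : 0 ≤ a) (hb : 0 ≤ b) : lpSum p a b ^ p = a ^ p + b ^ p :=
  Real.rpow_inv_rpow (by positivity) hp

lemma lpSum_mono {a' b' : ℝ} (hp : 0 ≤ p) (ha : 0 ≤ a) (hb : 0 ≤ b) (haa' : a ≤ a')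
    (hbb' : b ≤ b') : lpSum p a b ≤ lpSum p a' b' := by
  unfold lpSum
  gcongr

lemma le_lpSum_left (hp : 0 < p) (ha : 0 ≤ a) (hb : 0 ≤ b) : a ≤ lpSum p a b := by
  simpa [lpSum, Real.zero_rpow hp.ne', Real.rpow_rpow_inv ha hp.ne'] using
    lpSum_mono hp.le ha le_rfl le_rfl hb

lemma lpSum_le_add (hp : 1 ≤ p) (ha : 0 ≤ a) (hb : 0 ≤ b) : lpSum p a b ≤ a + b := by
  simpa only [lpSum, one_div] using Real.rpow_add_rpow_le_add ha hb hp

lemma div_lpSum_rpow_add_div_lpSum_rpow (hp : p ≠ 0) (ha : 0 < a) (hb : 0 < b) :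
    (a / lpSum p a b) ^ p + (b / lpSum p a b) ^ p = 1 := by
  have hR := lpSum_pos (p := p) ha hb
  rw [Real.div_rpow ha.le hR.le, Real.div_rpow hb.le hR.le, ← add_div,
    ← lpSum_rpow hp ha.le hb.le, div_self (Real.rpow_pos_of_pos hR p).ne']

variable {E : Type*} [NormedAddCommGroup E] [NormedSpace ℝ E] {f g : E → ℝ}

lemma contDiff_lpSum {n : WithTop ℕ∞} (hf : ContDiff ℝ n f) (hg : ContDiff ℝ n g)
    (hf₀ : ∀ x, 0 < f x) (hg₀ : ∀ x, 0 < g x) : ContDiff ℝ n fun x => lpSum p (f x) (g x) := by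
  refine ((hf.rpow_const_of_ne fun x => (hf₀ x).ne').add
    (hg.rpow_const_of_ne fun x => (hg₀ x).ne')).rpow_const_of_ne fun x => ?_
  have := hf₀ x
  have := hg₀ x
  positivity

lemma hasFDerivAt_lpSum {f' g' : E →L[ℝ] ℝ} {x : E} (hp : p ≠ 0) (hf : HasFDerivAt f f' x)
    (hg : HasFDerivAt g g' x) (hf₀ : 0 < f x) (hg₀ : 0 < g x) :
    HasFDerivAt (fun x => lpSum p (f x) (g x))
      ((f x / lpSum p (f x) (g x)) ^ (p - 1) • f' + (g x / lpSum p (f x) (g x)) ^ (p - 1) • g')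
      x := by
  set R := lpSum p (f x) (g x)
  have hR : 0 < R := lpSum_pos hf₀ hg₀
  have hsum : 0 < f x ^ p + g x ^ p := by positivity
  have hR_pow : (f x ^ p + g x ^ p) ^ (p⁻¹ - 1) = (R ^ (p - 1))⁻¹ := by
    rw [← lpSum_rpow hp hf₀.le hg₀.le, ← Real.rpow_mul hR.le, ← Real.rpow_neg hR.le, mul_sub,
      mul_inv_cancel₀ hp, mul_one, neg_sub]
  have h := ((hf.rpow_const (p := p) (.inl hf₀.ne')).add
    (hg.rpow_const (p := p) (.inl hg₀.ne'))).rpow_const (p := p⁻¹) (.inl hsum.ne')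
  refine h.congr_fderiv ?_
  rw [Pi.add_apply, hR_pow, Real.div_rpow hf₀.le hR.le, Real.div_rpow hg₀.le hR.le]
  ext y
  simp
  field_simp

end LpSum

section LogarithmicEstimate

variable {E : Type*} {Ω : Set E} {u w : E → ℝ} {p κ δ : ℝ}

/-- The pointwise `ℓ^p` sum of two nonnegative functions, regularised by `κ > 0` so that it is
smooth, and normalised to vanish where both do. -/
noncomputable def regLpSum (p κ : ℝ) (u w : E → ℝ) (x : E) : ℝ :=
  lpSum p (u x + κ) (w x + κ) - lpSum p κ κ

lemma max_sub_le_regLpSum (hp : 1 ≤ p) (hκ : 0 ≤ κ) (hu : ∀ x, 0 ≤ u x) (hw : ∀ x, 0 ≤ w x)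
    (x : E) : max (u x - κ) 0 ≤ regLpSum p κ u w x := by
  have h₀ : lpSum p κ κ ≤ lpSum p (u x + κ) (w x + κ) :=
    lpSum_mono (by linarith) hκ hκ (by linarith [hu x]) (by linarith [hw x])
  have h₁ : u x + κ ≤ lpSum p (u x + κ) (w x + κ) :=
    le_lpSum_left (by linarith) (by linarith [hu x]) (by linarith [hw x])
  have h₂ : lpSum p κ κ ≤ κ + κ := lpSum_le_add hp hκ hκ
  exact max_le (by rw [regLpSum]; linarith) (sub_nonneg.2 h₀)

variable [NormedAddCommGroup E] [NormedSpace ℝ E]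

lemma IsTestFunction.regLpSum (hu : IsTestFunction Ω u) (hw : IsTestFunction Ω w) (hκ : 0 < κ)
    (hu₀ : ∀ x, 0 ≤ u x) (hw₀ : ∀ x, 0 ≤ w x) : IsTestFunction Ω (regLpSum p κ u w) := by
  have hsupp : tsupport (_root_.regLpSum p κ u w) ⊆ tsupport u ∪ tsupport w := by
    refine closure_minimal (fun x => ?_) ((isClosed_tsupport u).union (isClosed_tsupport w))
    contrapose!
    intro hx
    simp [_root_.regLpSum, image_eq_zero_of_notMem_tsupport fun h => hx (.inl h),
      image_eq_zero_of_notMem_tsupport fun h => hx (.inr h)]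
  refine ⟨(contDiff_lpSum (hu.contDiff.add contDiff_const) (hw.contDiff.add contDiff_const)
    (fun x => by linarith [hu₀ x]) fun x => by linarith [hw₀ x]).sub contDiff_const, ?_, ?_⟩
  · exact (hu.hasCompactSupport.isCompact.union hw.hasCompactSupport).of_isClosed_subset
      (isClosed_tsupport _) hsupp
  · exact hsupp.trans (union_subset hu.tsupport_subset hw.tsupport_subset)

lemma fderiv_regLpSum {x : E} (hp : p ≠ 0) (hu : DifferentiableAt ℝ u x)
    (hw : DifferentiableAt ℝ w x) (hux : 0 < u x + κ) (hwx : 0 < w x + κ) :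
    fderiv ℝ (regLpSum p κ u w) x =
      ((u x + κ) / lpSum p (u x + κ) (w x + κ)) ^ (p - 1) • fderiv ℝ u x +
        ((w x + κ) / lpSum p (u x + κ) (w x + κ)) ^ (p - 1) • fderiv ℝ w x :=
  ((hasFDerivAt_lpSum hp (hu.hasFDerivAt.add_const κ) (hw.hasFDerivAt.add_const κ)
    hux hwx).sub_const _).fderiv

lemma norm_fderiv_regLpSum_rpow_le {x : E} (hp : 1 ≤ p) (hu : DifferentiableAt ℝ u x)
    (hw : DifferentiableAt ℝ w x) (hux : 0 < u x + κ) (hwx : 0 < w x + κ) :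
    ‖fderiv ℝ (regLpSum p κ u w) x‖ ^ p ≤ ‖fderiv ℝ u x‖ ^ p + ‖fderiv ℝ w x‖ ^ p := by
  have hp₀ : p ≠ 0 := by positivity
  have hR := lpSum_pos (p := p) hux hwx
  rw [fderiv_regLpSum hp₀ hu hw hux hwx]
  exact norm_rpow_smul_add_rpow_smul_le hp (div_pos hux hR) (div_pos hwx hR)
    (div_lpSum_rpow_add_div_lpSum_rpow hp₀ hux hwx)

lemma norm_fderiv_regLpSum_rpow_add_le {x : E} (hp : 1 ≤ p) (hκ : 0 < κ) (hκδ : 2 * κ ≤ δ)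
    (hux : 0 ≤ u x) (hu : DifferentiableAt ℝ u x) (hw : w =ᶠ[𝓝 x] fun _ => δ) :
    ‖fderiv ℝ (regLpSum p κ u w) x‖ ^ p +
      min 1 (p - 1) * (δ * ‖fderiv ℝ u x‖ / (u x + 2 * δ)) ^ p ≤ ‖fderiv ℝ u x‖ ^ p := by
  have hp₀ : p ≠ 0 := by positivity
  have hwx : w x = δ := hw.eq_of_nhds
  have hU : 0 < u x + κ := by linarith
  have hV : 0 < w x + κ := by linarith
  have hR := lpSum_pos (p := p) hU hV
  have hR_le : lpSum p (u x + κ) (w x + κ) ≤ u x + 2 * δ := by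
    linarith [lpSum_le_add hp hU.le hV.le]
  have hdeficit := norm_rpow_smul_rpow_le (a := fderiv ℝ u x) hp (div_pos hU hR).le
    (div_pos hV hR).le (div_lpSum_rpow_add_div_lpSum_rpow hp₀ hU hV)
  have hratio : (δ * ‖fderiv ℝ u x‖ / (u x + 2 * δ)) ^ p ≤
      ((w x + κ) / lpSum p (u x + κ) (w x + κ)) ^ p * ‖fderiv ℝ u x‖ ^ p := by
    rw [← Real.mul_rpow (by positivity) (norm_nonneg _), mul_div_right_comm]
    gcongr
    · have : 0 < δ := by linarith
      positivity
    · linarith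
  rw [fderiv_regLpSum hp₀ hu (hw.differentiableAt_iff.2 (differentiableAt_const δ)) hU hV,
    hw.fderiv_eq, fderiv_fun_const, Pi.zero_apply, smul_zero, add_zero]
  have := mul_le_mul_of_nonneg_left hratio (le_min zero_le_one (sub_nonneg.2 hp))
  linarith

variable [MeasurableSpace E] [OpensMeasurableSpace E] {μ : Measure E} [IsFiniteMeasureOnCompacts μ]
  {K : Set E}

lemma IsTestFunction.integrable_log_fderiv_rpow (hu : IsTestFunction Ω u) (hu₀ : ∀ x, 0 ≤ u x)
    (hp : 0 < p) (hδ : 0 < δ) :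
    Integrable (fun x => (δ * ‖fderiv ℝ u x‖ / (u x + 2 * δ)) ^ p) μ := by
  have hpos : ∀ x, u x + 2 * δ ≠ 0 := fun x => by
    have := hu₀ x
    positivity
  refine Continuous.integrable_of_hasCompactSupport ?_ ?_
  · exact ((continuous_const.mul hu.continuous_fderiv.norm).div
      (hu.contDiff.continuous.add continuous_const) hpos).rpow_const fun _ => .inr hp.le
  · refine (hu.hasCompactSupport.fderiv (𝕜 := ℝ)).mono fun x => ?_
    contrapose!
    intro hx
    simp [Function.notMem_support.1 hx, hp.ne']

lemma integral_norm_fderiv_regLpSum_rpow_add_le (hp : 1 ≤ p) (hκ : 0 < κ) (hκδ : 2 * κ ≤ δ)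
    (hu : IsTestFunction Ω u) (hu₀ : ∀ x, 0 ≤ u x) (hw : IsTestFunction Ω w) (hw₀ : ∀ x, 0 ≤ w x)
    (hK : IsOpen K) (hwK : EqOn w (fun _ => δ) K) :
    (∫ x, ‖fderiv ℝ (regLpSum p κ u w) x‖ ^ p ∂μ) +
      min 1 (p - 1) * ∫ x in K, (δ * ‖fderiv ℝ u x‖ / (u x + 2 * δ)) ^ p ∂μ ≤
        (∫ x, ‖fderiv ℝ u x‖ ^ p ∂μ) + ∫ x, ‖fderiv ℝ w x‖ ^ p ∂μ := by
  have hp₀ : 0 < p := by positivity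
  have hW := (hu.regLpSum (p := p) hw hκ hu₀ hw₀).integrable_norm_fderiv_rpow (μ := μ) hp₀
  have hlog := (((hu.integrable_log_fderiv_rpow (μ := μ) hu₀ hp₀ (by linarith : 0 < δ)).indicator
    hK.measurableSet).const_mul (min 1 (p - 1)))
  have hu_int := hu.integrable_norm_fderiv_rpow (μ := μ) hp₀
  have hw_int := hw.integrable_norm_fderiv_rpow (μ := μ) hp₀
  rw [← integral_indicator hK.measurableSet, ← integral_const_mul, ← integral_add hW hlog,
    ← integral_add hu_int hw_int]
  refine integral_mono (hW.add hlog) (hu_int.add hw_int) fun x => ?_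
  by_cases hx : x ∈ K
  · simp only [indicator_of_mem hx]
    exact (norm_fderiv_regLpSum_rpow_add_le hp hκ hκδ (hu₀ x) (hu.differentiable x)
      (hwK.eventuallyEq_of_mem (hK.mem_nhds hx))).trans (le_add_of_nonneg_right (by positivity))
  · simp only [indicator_of_notMem hx, mul_zero, add_zero]
    exact norm_fderiv_regLpSum_rpow_le hp (hu.differentiable x) (hw.differentiable x)
      (by linarith [hu₀ x]) (by linarith [hw₀ x])

lemma tendsto_integral_norm_max_sub_rpow (hu : IsTestFunction Ω u) (hu₀ : ∀ x, 0 ≤ u x)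
    (hp : 0 < p) :
    Tendsto (fun κ => ∫ x, ‖max (u x - κ) 0‖ ^ p ∂μ) (𝓝[>] 0) (𝓝 (∫ x, ‖u x‖ ^ p ∂μ)) := by
  have h := tendsto_integral_norm_rpow_comp (μ := μ) (φ := fun κ t => max (|t| - κ) 0)
    (l := 𝓝[>] 0) hp.le hu.contDiff.continuous.aestronglyMeasurable (hu.integrable_norm_rpow hp)
    (fun κ => by fun_prop) ?_ fun t => ?_
  · simpa only [abs_of_nonneg (hu₀ _)] using h
  · filter_upwards [self_mem_nhdsWithin] with κ hκ t
    rw [Real.norm_of_nonneg (le_max_right _ _)]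
    exact max_le (sub_le_self _ (le_of_lt hκ)) (norm_nonneg t)
  · have hcont : Continuous fun κ : ℝ => ‖max (|t| - κ) 0‖ := by fun_prop
    simpa using (hcont.tendsto 0).mono_left nhdsWithin_le_nhds

lemma setIntegral_log_fderiv_rpow_le [μ.IsOpenPosMeasure] (hp : 1 ≤ p) (hu : IsTestFunction Ω u)
    (hu₀ : ∀ x, 0 ≤ u x) (hw : IsTestFunction Ω w) (hw₀ : ∀ x, 0 ≤ w x) (hK : IsOpen K)
    (hδ : 0 < δ) (hwK : EqOn w (fun _ => δ) K) :
    min 1 (p - 1) * ∫ x in K, (δ * ‖fderiv ℝ u x‖ / (u x + 2 * δ)) ^ p ∂μ ≤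
      rayleighDeficit μ p Ω u + ∫ x, ‖fderiv ℝ w x‖ ^ p ∂μ := by
  have hp₀ : 0 < p := by positivity
  set J := min 1 (p - 1) * ∫ x in K, (δ * ‖fderiv ℝ u x‖ / (u x + 2 * δ)) ^ p ∂μ
  have hκ_bound : ∀ κ ∈ Ioc 0 (δ / 2), rayleighInf μ p Ω * (∫ x, ‖max (u x - κ) 0‖ ^ p ∂μ) + J ≤
      (∫ x, ‖fderiv ℝ u x‖ ^ p ∂μ) + ∫ x, ‖fderiv ℝ w x‖ ^ p ∂μ := by
    rintro κ ⟨hκ, hκδ⟩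
    have hW : IsTestFunction Ω (regLpSum p κ u w) := hu.regLpSum hw hκ hu₀ hw₀
    refine le_trans ?_ (integral_norm_fderiv_regLpSum_rpow_add_le hp hκ (by linarith) hu hu₀ hw hw₀
      hK hwK)
    gcongr
    refine le_trans (mul_le_mul_of_nonneg_left ?_ (rayleighInf_nonneg μ p Ω))
      (rayleighInf_mul_integral_le hp₀ hW)
    refine integral_mono_of_nonneg (.of_forall fun _ => by positivity)
      (hW.integrable_norm_rpow hp₀) (.of_forall fun x => ?_)
    refine Real.rpow_le_rpow (norm_nonneg _) ?_ hp₀.le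
    rw [Real.norm_of_nonneg (le_max_right _ _)]
    exact (max_sub_le_regLpSum hp hκ.le hu₀ hw₀ x).trans (le_abs_self _)
  have hlimit := le_of_tendsto
    (((tendsto_integral_norm_max_sub_rpow hu hu₀ hp₀).const_mul (rayleighInf μ p Ω)).add_const J)
    (eventually_of_mem (Ioc_mem_nhdsGT (half_pos hδ)) hκ_bound)
  rw [rayleighDeficit]
  linarith

end LogarithmicEstimate

section Propagation

variable {E : Type*} [NormedAddCommGroup E] [NormedSpace ℝ E] {Ω : Set E} {p δ c : ℝ}

lemma norm_fderiv_log_add {u : E → ℝ} {x : E} (hu : DifferentiableAt ℝ u x) (hpos : 0 < u x + c) :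
    ‖fderiv ℝ (fun y => Real.log (u y + c)) x‖ = ‖fderiv ℝ u x‖ / (u x + c) := by
  rw [((hu.hasFDerivAt.add_const c).log hpos.ne').fderiv, norm_smul, norm_inv,
    Real.norm_of_nonneg hpos.le, inv_mul_eq_div]

variable [MeasurableSpace E] [BorelSpace E] {μ : Measure E} [μ.IsAddHaarMeasure]

lemma setIntegral_norm_fderiv_log_rpow_le {u η : E → ℝ} (hp : 1 ≤ p) (hu : IsTestFunction Ω u)
    (hu₀ : ∀ x, 0 ≤ u x) (hη : IsTestFunction Ω η) (hη₀ : ∀ x, 0 ≤ η x) {K : Set E}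
    (hK : IsOpen K) (hδ : 0 < δ) (hηK : EqOn η 1 K) :
    min 1 (p - 1) * ∫ x in K, ‖fderiv ℝ (fun y => Real.log (u y + 2 * δ)) x‖ ^ p ∂μ ≤
      rayleighDeficit μ p Ω u / δ ^ p + ∫ x, ‖fderiv ℝ η x‖ ^ p ∂μ := by
  have hδp : 0 < δ ^ p := Real.rpow_pos_of_pos hδ p
  have hlog : ∀ x, (δ * ‖fderiv ℝ u x‖ / (u x + 2 * δ)) ^ p =
      δ ^ p * ‖fderiv ℝ (fun y => Real.log (u y + 2 * δ)) x‖ ^ p := fun x => by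
    have hpos : 0 < u x + 2 * δ := by linarith [hu₀ x]
    rw [norm_fderiv_log_add (hu.differentiable x) hpos, mul_div_assoc,
      Real.mul_rpow hδ.le (by positivity)]
  have hscale : ∀ x, ‖fderiv ℝ (fun y => δ * η y) x‖ ^ p = δ ^ p * ‖fderiv ℝ η x‖ ^ p := fun x => by
    rw [fderiv_const_mul (hη.differentiable x), norm_smul, Real.norm_of_nonneg hδ.le,
      Real.mul_rpow hδ.le (norm_nonneg _)]
  have hmain := setIntegral_log_fderiv_rpow_le (μ := μ) hp hu hu₀ (hη.const_mul δ)
    (fun x => mul_nonneg hδ.le (hη₀ x)) hK hδ fun x hx => by simp [hηK hx]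
  simp only [hlog, hscale, integral_const_mul] at hmain
  rw [div_add' _ _ _ hδp.ne', le_div_iff₀ hδp]
  linarith

variable [FiniteDimensional ℝ E]

lemma ofReal_log_mul_measure_le {u : E → ℝ} (hu : ContDiff ℝ 1 u) (hu₀ : ∀ x, 0 ≤ u x)
    (hδ : 0 < δ) (hc : 0 < c) (v : E) {S K : Set E}
    (hSK : ∀ y ∈ S, ∀ t ∈ Icc (0 : ℝ) 1, y + t • v ∈ K) :
    ENNReal.ofReal (Real.log (c / (3 * δ))) * μ.restrict S {y | c ≤ u y ∧ u (y + v) ≤ δ} ≤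
      ‖v‖ₑ * ∫⁻ y in K, ‖fderiv ℝ (fun z => Real.log (u z + 2 * δ)) y‖ₑ ∂μ := by
  set g : E → ℝ := fun z => Real.log (u z + 2 * δ)
  have hpos : ∀ y, 0 < u y + 2 * δ := fun y => by linarith [hu₀ y]
  have hg : ContDiff ℝ 1 g := (hu.add contDiff_const).log fun y => (hpos y).ne'
  have hg_cont : Continuous fun y => ‖g (y + v) - g y‖ₑ := by
    have := hg.continuous
    fun_prop
  have hjump : ∀ y, c ≤ u y ∧ u (y + v) ≤ δ →
      ENNReal.ofReal (Real.log (c / (3 * δ))) ≤ ‖g (y + v) - g y‖ₑ := fun y hy => by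
    rw [← ofReal_norm, norm_sub_rev, ← Real.log_div (hpos _).ne' (hpos _).ne']
    refine ENNReal.ofReal_le_ofReal (le_trans ?_ (Real.le_norm_self _))
    exact Real.log_le_log (by positivity)
      (div_le_div₀ (hpos _).le (by linarith [hy.1]) (hpos _) (by linarith [hy.2]))
  calc ENNReal.ofReal (Real.log (c / (3 * δ))) * μ.restrict S {y | c ≤ u y ∧ u (y + v) ≤ δ}
      ≤ ∫⁻ y in S, ‖g (y + v) - g y‖ₑ ∂μ :=
        (mul_le_mul_right (measure_mono hjump) _).trans
          (mul_meas_ge_le_lintegral hg_cont.measurable _)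
    _ ≤ ‖v‖ₑ * ∫⁻ y in K, ‖fderiv ℝ g y‖ₑ ∂μ := setLIntegral_enorm_sub_translate_le hg v hSK

lemma ofReal_log_mul_measure_ball_le {u η : E → ℝ} (hp : 1 < p) (hu : IsTestFunction Ω u)
    (hu₀ : ∀ x, 0 ≤ u x) (hη : IsTestFunction Ω η) (hη₀ : ∀ x, 0 ≤ η x) (hδ : 0 < δ) (hc : 0 < c)
    {x v : E} {ρ r : ℝ} (hρ : ρ ≤ r) (hv : ‖v‖ < r) (hηx : EqOn η 1 (ball x (2 * r))) :
    ENNReal.ofReal (Real.log (c / (3 * δ))) *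
        μ.restrict (ball x ρ) {y | c ≤ u y ∧ u (y + v) ≤ δ} ≤
      ENNReal.ofReal (‖v‖ * (μ.real (ball x (2 * r)) +
        (rayleighDeficit μ p Ω u / δ ^ p + ∫ y, ‖fderiv ℝ η y‖ ^ p ∂μ) / min 1 (p - 1))) := by
  have hu_C1 : ContDiff ℝ 1 u := hu.contDiff.of_le (by exact_mod_cast le_top)
  have hsegment : ∀ y ∈ ball x ρ, ∀ t ∈ Icc (0 : ℝ) 1, y + t • v ∈ ball x (2 * r) := by
    intro y hy t ht
    have htv : ‖t • v‖ ≤ ‖v‖ := by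
      rw [norm_smul, Real.norm_of_nonneg ht.1]
      exact mul_le_of_le_one_left (norm_nonneg v) ht.2
    rw [mem_ball, dist_eq_norm] at hy ⊢
    rw [add_sub_right_comm]
    linarith [norm_add_le (y - x) (t • v)]
  have hg_cont : Continuous (fderiv ℝ fun z => Real.log (u z + 2 * δ)) :=
    ((hu_C1.add contDiff_const).log fun y => by linarith [hu₀ y]).continuous_fderiv one_ne_zero
  have hint : IntegrableOn (fun y => ‖fderiv ℝ (fun z => Real.log (u z + 2 * δ)) y‖ ^ p)
      (ball x (2 * r)) μ :=
    ((hg_cont.norm.rpow_const fun _ => .inr (by linarith)).continuousOn.integrableOn_compact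
      (isCompact_closedBall x (2 * r))).mono_set ball_subset_closedBall
  have := isFiniteMeasure_restrict.2 (measure_ball_lt_top (μ := μ) (x := x) (r := 2 * r)).ne
  have hmin : 0 < min 1 (p - 1) := lt_min one_pos (by linarith)
  refine (ofReal_log_mul_measure_le hu_C1 hu₀ hδ hc v hsegment).trans ?_
  rw [ENNReal.ofReal_mul (norm_nonneg v), ofReal_norm]
  refine mul_le_mul_right ((lintegral_enorm_le_measureReal_add_integral_rpow hp.le hint).trans
    (ENNReal.ofReal_le_ofReal ?_)) _
  rw [measureReal_restrict_apply_univ]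
  gcongr
  rw [le_div_iff₀' hmin]
  exact setIntegral_norm_fderiv_log_rpow_le hp.le hu hu₀ hη hη₀ isOpen_ball hδ hηx

lemma exists_ofReal_le_mul_ofReal_log (hc : 0 < c) (M : ℝ) {e : ℝ≥0∞} (he : 0 < e) :
    ∃ δ > 0, ∀ m : ℝ≥0∞,
      ENNReal.ofReal (Real.log (c / (3 * δ))) * m ≤ ENNReal.ofReal M → m ≤ e := by
  have harg : Tendsto (fun δ : ℝ => c / (3 * δ)) (𝓝[>] 0) atTop := by
    refine (tendsto_inv_nhdsGT_zero.const_mul_atTop (by positivity : 0 < c / 3)).congr fun δ => ?_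
    rw [← div_eq_mul_inv, div_div]
  have hlog : Tendsto (fun δ : ℝ => ENNReal.ofReal (Real.log (c / (3 * δ)))) (𝓝[>] 0) (𝓝 ∞) :=
    ENNReal.tendsto_ofReal_atTop.comp (Real.tendsto_log_atTop.comp harg)
  have hquot := ENNReal.Tendsto.const_div (a := ENNReal.ofReal M) hlog (.inr ENNReal.ofReal_ne_top)
  rw [ENNReal.div_top] at hquot
  obtain ⟨δ, hδe, hδlog, hδ⟩ := ((hquot.eventually_le_const he).and
    ((hlog.eventually_ne ENNReal.top_ne_zero).and self_mem_nhdsWithin)).exists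
  refine ⟨δ, hδ, fun m hm => le_trans ?_ hδe⟩
  rwa [ENNReal.le_div_iff_mul_le (.inl hδlog) (.inl ENNReal.ofReal_ne_top), mul_comm]

variable {ι : Type*} {l : Filter ι} {u : ι → E → ℝ}

lemma tendstoInMeasure_restrict_ball_of_dist_lt (hp : 1 < p) (hu : ∀ i, IsTestFunction Ω (u i))
    (hu₀ : ∀ i x, 0 ≤ u i x) (hdef : Tendsto (fun i => rayleighDeficit μ p Ω (u i)) l (𝓝 0))
    {a x : E} {ρ r : ℝ} (hxΩ : closedBall x (3 * r) ⊆ Ω) (hax : dist a x < r) (hρ : ρ ≤ r)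
    (h : TendstoInMeasure (μ.restrict (ball a ρ)) u l 0) :
    TendstoInMeasure (μ.restrict (ball x ρ)) u l 0 := by
  rw [tendstoInMeasure_zero_iff_of_nonneg hu₀] at h ⊢
  intro c hc
  rw [ENNReal.tendsto_nhds_zero]
  intro e he
  have hr : 0 < r := dist_nonneg.trans_lt hax
  let η : ContDiffBump x := ⟨2 * r, 3 * r, by positivity, by linarith⟩
  have hη : IsTestFunction Ω η :=
    ⟨η.contDiff, η.hasCompactSupport, η.tsupport_eq.trans_subset hxΩ⟩
  have hηx : EqOn η 1 (ball x (2 * r)) := fun y hy =>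
    η.one_of_mem_closedBall (ball_subset_closedBall hy)
  obtain ⟨δ, hδ, hδe⟩ := exists_ofReal_le_mul_ofReal_log hc
    (‖a - x‖ * (μ.real (ball x (2 * r)) + (1 + ∫ y, ‖fderiv ℝ η y‖ ^ p ∂μ) / min 1 (p - 1)))
    (ENNReal.half_pos he.ne')
  have hδp : 0 < δ ^ p := Real.rpow_pos_of_pos hδ p
  have := lt_min one_pos (sub_pos.2 hp)
  filter_upwards [hdef.eventually_le_const hδp,
    ENNReal.tendsto_nhds_zero.1 (h δ hδ) (e / 2) (ENNReal.half_pos he.ne')] with i hi hia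
  have hjump : μ.restrict (ball x ρ) {y | c ≤ u i y ∧ u i (y + (a - x)) ≤ δ} ≤ e / 2 := by
    refine hδe _ ((ofReal_log_mul_measure_ball_le hp (hu i) (hu₀ i) hη (fun _ => η.nonneg) hδ hc hρ
      ((dist_eq_norm a x).symm.trans_lt hax) hηx).trans (ENNReal.ofReal_le_ofReal ?_))
    gcongr
    exact (div_le_one hδp).2 hi
  calc μ.restrict (ball x ρ) {y | c ≤ u i y}
      ≤ e / 2 + e / 2 :=
        (measure_restrict_ball_ge_le (u i) c δ a x ρ).trans (add_le_add hjump hia)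
    _ = e := ENNReal.add_halves e

lemma tendstoInMeasure_restrict_of_isPreconnected (hp : 1 < p) (hΩ : IsOpen Ω) (hμΩ : μ Ω ≠ ∞)
    (hconn : IsPreconnected Ω) (hu : ∀ i, IsTestFunction Ω (u i)) (hu₀ : ∀ i x, 0 ≤ u i x)
    (hdef : Tendsto (fun i => rayleighDeficit μ p Ω (u i)) l (𝓝 0))
    (h : ∃ x ∈ Ω, ∃ s ∈ 𝓝 x, TendstoInMeasure (μ.restrict s) u l 0) :
    TendstoInMeasure (μ.restrict Ω) u l 0 := by
  refine tendstoInMeasure_restrict_of_forall_mem_nhds hΩ.measurableSet hμΩ ?_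
  refine hconn.subset_of_closure_inter_subset
    (u := {x | ∃ s ∈ 𝓝 x, TendstoInMeasure (μ.restrict s) u l 0}) ?_ h ?_
  · refine isOpen_iff_mem_nhds.2 fun x ⟨s, hs, hsu⟩ => ?_
    filter_upwards [eventually_mem_nhds_iff.2 hs] with y hy using ⟨s, hy, hsu⟩
  · rintro x ⟨hx, hxΩ⟩
    obtain ⟨R, hR, hRΩ⟩ := nhds_basis_closedBall.mem_iff.1 (hΩ.mem_nhds hxΩ)
    obtain ⟨a, ⟨s, hs, hsu⟩, hxa⟩ := mem_closure_iff.1 hx (R / 3) (by positivity)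
    obtain ⟨ρ, hρ, hρs⟩ := nhds_basis_ball.mem_iff.1 hs
    refine ⟨ball x (min ρ (R / 3)), ball_mem_nhds x (by positivity), ?_⟩
    refine tendstoInMeasure_restrict_ball_of_dist_lt hp hu hu₀ hdef (r := R / 3)
      (by rwa [mul_div_cancel₀ _ three_ne_zero]) (by rwa [dist_comm]) (min_le_right _ _) ?_
    exact tendstoInMeasure_mono_measure hsu (Measure.restrict_mono_set _
      ((ball_subset_ball (min_le_left _ _)).trans hρs))

end Propagation

section Sobolev

open scoped NNReal

lemma exists_sobolev_exponents {p N : ℝ} (hp : 1 ≤ p) (hN : 1 < N) :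
    ∃ r q : ℝ≥0, 1 ≤ r ∧ r ≤ p ∧ r < N ∧ p < q ∧ (r : ℝ)⁻¹ - N⁻¹ ≤ (q : ℝ)⁻¹ := by
  have hp₀ : 0 < p := by linarith
  have hN₀ : 0 < N := by linarith
  obtain ⟨t, hNt, ht⟩ := exists_between
    (lt_min (inv_lt_one_of_one_lt₀ hN) (lt_add_of_pos_left N⁻¹ (inv_pos.2 hp₀)))
  obtain ⟨ht₁, htp⟩ := lt_min_iff.1 ht
  set m := max p⁻¹ t
  have hm₁ : m ≤ 1 := max_le (inv_le_one_of_one_le₀ hp) ht₁.le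
  have hNm : N⁻¹ < m := hNt.trans_le (le_max_right _ _)
  have hm₀ : 0 < m := (inv_pos.2 hN₀).trans hNm
  have hmp : m - N⁻¹ < p⁻¹ :=
    sub_lt_iff_lt_add.2 (max_lt (lt_add_of_pos_right _ (by positivity)) htp)
  refine ⟨⟨m⁻¹, by positivity⟩, ⟨(m - N⁻¹)⁻¹, inv_nonneg.2 (sub_pos.2 hNm).le⟩, ?_, ?_, ?_, ?_, ?_⟩
  · exact_mod_cast (one_le_inv₀ hm₀).2 hm₁
  · exact inv_le_of_inv_le₀ hp₀ (le_max_left _ _)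
  · exact inv_lt_of_inv_lt₀ hN₀ hNm
  · exact (lt_inv_comm₀ hp₀ (sub_pos.2 hNm)).2 hmp
  · exact_mod_cast (by simp : m⁻¹⁻¹ - N⁻¹ ≤ (m - N⁻¹)⁻¹⁻¹)

variable {E : Type*} [NormedAddCommGroup E] [NormedSpace ℝ E] [FiniteDimensional ℝ E]
  [MeasurableSpace E] [BorelSpace E] {μ : Measure E} [μ.IsAddHaarMeasure] {Ω : Set E} {p : ℝ}

lemma exists_eLpNorm_le_mul_eLpNorm_fderiv (hE : 1 < Module.finrank ℝ E) (hp : 1 ≤ p)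
    (hΩ : Bornology.IsBounded Ω) :
    ∃ q : ℝ≥0∞, ENNReal.ofReal p < q ∧ ∃ C ≠ ∞, ∀ u, IsTestFunction Ω u →
      eLpNorm u q μ ≤ C * eLpNorm (fderiv ℝ u) (ENNReal.ofReal p) μ := by
  have hp₀ : 0 ≤ p := by linarith
  obtain ⟨r, q, hr₁, hrp, hrE, hpq, hrq⟩ :=
    exists_sobolev_exponents hp (N := Module.finrank ℝ E) (by exact_mod_cast hE)
  set θ : ℝ := 1 / (r : ℝ≥0∞).toReal - 1 / (ENNReal.ofReal p).toReal with hθ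
  have hθ₀ : 0 ≤ θ := by
    rw [hθ, ENNReal.toReal_ofReal hp₀, ENNReal.coe_toReal, sub_nonneg]
    exact one_div_le_one_div_of_le (by exact_mod_cast zero_lt_one.trans_le hr₁) hrp
  refine ⟨q, (ENNReal.ofReal_lt_coe_iff hp₀).2 hpq,
    eLpNormLESNormFDerivOfLeConst ℝ μ Ω r q * μ Ω ^ θ,
    ENNReal.mul_ne_top ENNReal.coe_ne_top
      (ENNReal.rpow_ne_top_of_nonneg hθ₀ hΩ.measure_lt_top.ne), fun u hu => ?_⟩
  have hsobolev : eLpNorm u q μ ≤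
      eLpNormLESNormFDerivOfLeConst ℝ μ Ω r q * eLpNorm (fderiv ℝ u) r μ :=
    eLpNorm_le_eLpNorm_fderiv_of_le μ (hu.contDiff.of_le (by exact_mod_cast le_top))
      ((subset_tsupport u).trans hu.tsupport_subset) hr₁ (by exact_mod_cast hrE) hrq hΩ
  have hholder :
      eLpNorm (fderiv ℝ u) r μ ≤ eLpNorm (fderiv ℝ u) (ENNReal.ofReal p) μ * μ Ω ^ θ :=
    eLpNorm_le_eLpNorm_mul_rpow_measure_of_support_subset
      ((ENNReal.le_ofReal_iff_toReal_le ENNReal.coe_ne_top hp₀).2 hrp)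
      hu.continuous_fderiv.aestronglyMeasurable
      (Function.support_subset_iff'.2 fun _ => hu.fderiv_eq_zero_of_notMem)
  calc eLpNorm u q μ
      ≤ eLpNormLESNormFDerivOfLeConst ℝ μ Ω r q *
          (eLpNorm (fderiv ℝ u) (ENNReal.ofReal p) μ * μ Ω ^ θ) :=
        hsobolev.trans (mul_le_mul_right hholder _)
    _ = eLpNormLESNormFDerivOfLeConst ℝ μ Ω r q * μ Ω ^ θ *
          eLpNorm (fderiv ℝ u) (ENNReal.ofReal p) μ := by ring

lemma tendsto_eLpNorm_zero_of_tendstoInMeasure (hE : 1 < Module.finrank ℝ E) (hp : 1 ≤ p)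
    (hΩ : Bornology.IsBounded Ω) {u : ℕ → E → ℝ} (hu : ∀ n, IsTestFunction Ω (u n)) {B : ℝ}
    (hB : ∀ n, ∫ x, ‖fderiv ℝ (u n) x‖ ^ p ∂μ ≤ B)
    (h : TendstoInMeasure (μ.restrict Ω) u atTop 0) :
    Tendsto (fun n => eLpNorm (u n) (ENNReal.ofReal p) μ) atTop (𝓝 0) := by
  obtain ⟨q, hpq, C, hC, hsobolev⟩ := exists_eLpNorm_le_mul_eLpNorm_fderiv (μ := μ) hE hp hΩ
  have hp₁ : 1 ≤ ENNReal.ofReal p := ENNReal.one_le_ofReal.2 hp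
  have hfderiv : ∀ n, eLpNorm (fderiv ℝ (u n)) (ENNReal.ofReal p) μ ≤ ENNReal.ofReal (B ^ p⁻¹) := by
    intro n
    rw [eLpNorm_ofReal_eq (by linarith) ((hu n).continuous_fderiv.memLp_of_hasCompactSupport
      ((hu n).hasCompactSupport.fderiv (𝕜 := ℝ)))]
    have := hB n
    gcongr
  have hbound : ∀ n, eLpNorm (u n) q (μ.restrict Ω) ≤ C * ENNReal.ofReal (B ^ p⁻¹) := fun n =>
    (eLpNorm_mono_measure _ Measure.restrict_le_self).trans
      ((hsobolev _ (hu n)).trans (mul_le_mul_right (hfderiv n) _))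
  have hmeas : ∀ n, AEStronglyMeasurable (u n) (μ.restrict Ω) := fun n =>
    (hu n).contDiff.continuous.aestronglyMeasurable
  have := isFiniteMeasure_restrict.2 (hΩ.measure_lt_top (μ := μ)).ne
  have hlim := tendsto_Lp_finite_of_tendstoInMeasure hp₁ ENNReal.ofReal_ne_top hmeas MemLp.zero
    (unifIntegrable_of_eLpNorm_le (zero_lt_one.trans_le hp₁).ne' hpq hmeas
      (ENNReal.mul_ne_top hC ENNReal.ofReal_ne_top) hbound) h
  refine hlim.congr fun n => ?_
  exact (eLpNorm_restrict_eq_of_support_subset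
    (Function.support_subset_iff'.2 fun _ hx => by simp [(hu n).eq_zero_of_notMem hx])).trans
    (congrArg (eLpNorm · _ μ) (sub_zero (u n)))

end Sobolev

section DomainMonotonicity

variable {E : Type*} [NormedAddCommGroup E] [NormedSpace ℝ E] [FiniteDimensional ℝ E]
  [MeasurableSpace E] [BorelSpace E] {μ : Measure E} [μ.IsAddHaarMeasure] {Ω Ω' : Set E} {p : ℝ}

lemma exists_minimizing_seq (hp : 0 < p) (hΩ : IsOpen Ω) (hne : Ω.Nonempty) :
    ∃ u : ℕ → E → ℝ, (∀ n, IsTestFunction Ω (u n)) ∧ (∀ n x, 0 ≤ u n x) ∧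
      (∀ n, ∫ x, ‖u n x‖ ^ p ∂μ = 1) ∧
      ∀ n : ℕ, ∫ x, ‖fderiv ℝ (u n) x‖ ^ p ∂μ < rayleighInf μ p Ω + 1 / ((n : ℝ) + 1) := by
  choose u hu hu₀ hu₁ hlt using fun n : ℕ =>
    exists_nonneg_normalized_integral_norm_fderiv_rpow_lt (μ := μ) hp hΩ hne
      (lt_add_of_pos_right (rayleighInf μ p Ω) (Nat.one_div_pos_of_nat (n := n)))
  exact ⟨u, hu, hu₀, hu₁, hlt⟩

theorem rayleighInf_lt_rayleighInf (hE : 1 < Module.finrank ℝ E) (hp : 1 < p) (hΩ : IsOpen Ω)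
    (hbdd : Bornology.IsBounded Ω) (hconn : IsPreconnected Ω) (hΩ' : IsOpen Ω')
    (hne : Ω'.Nonempty) (hsub : Ω' ⊆ Ω) (hcl : ¬ Ω ⊆ closure Ω') :
    rayleighInf μ p Ω < rayleighInf μ p Ω' := by
  by_contra! hle
  obtain ⟨u, hu', hu₀, hu₁, hlt⟩ := exists_minimizing_seq (μ := μ) (zero_lt_one.trans hp) hΩ' hne
  have hu : ∀ n, IsTestFunction Ω (u n) := fun n => (hu' n).mono hsub
  have hdef : Tendsto (fun n => rayleighDeficit μ p Ω (u n)) atTop (𝓝 0) := by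
    refine squeeze_zero (fun n => ?_) (fun n => ?_)
      (tendsto_one_div_add_atTop_nhds_zero_nat (𝕜 := ℝ))
    · exact sub_nonneg.2 (rayleighInf_mul_integral_le (by linarith) (hu n))
    · rw [rayleighDeficit, hu₁ n, mul_one]
      linarith [hlt n]
  obtain ⟨x, hxΩ, hxΩ'⟩ := not_subset.1 hcl
  have hvanish : TendstoInMeasure (μ.restrict (closure Ω')ᶜ) u atTop 0 :=
    tendstoInMeasure_of_ae_eq fun n => ae_restrict_of_forall_mem
      isClosed_closure.measurableSet.compl fun y hy =>
        (hu' n).eq_zero_of_notMem fun h => hy (subset_closure h)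
  have hmeas := tendstoInMeasure_restrict_of_isPreconnected hp hΩ hbdd.measure_lt_top.ne hconn hu
    hu₀ hdef ⟨x, hxΩ, _, isClosed_closure.isOpen_compl.mem_nhds hxΩ', hvanish⟩
  have hB : ∀ n, ∫ x, ‖fderiv ℝ (u n) x‖ ^ p ∂μ ≤ rayleighInf μ p Ω' + 1 := fun n =>
    (hlt n).le.trans (add_le_add_right ((div_le_one₀ (by positivity)).2 (by simp)) _)
  have hlim := tendsto_eLpNorm_zero_of_tendstoInMeasure hE hp.le hbdd hu hB hmeas
  have hone : ∀ n, eLpNorm (u n) (ENNReal.ofReal p) μ = 1 := fun n => by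
    rw [eLpNorm_ofReal_eq (by linarith) ((hu n).contDiff.continuous.memLp_of_hasCompactSupport
      (hu n).hasCompactSupport), hu₁ n]
    simp
  simp [hone] at hlim

end DomainMonotonicity

section EccentricAnnulus

variable {E : Type*} [NormedAddCommGroup E] [InnerProductSpace ℝ E] {e y z : E}
  {R₀ R₁ s s₁ s₂ t : ℝ}

lemma norm_sub_smul_sq (he : ‖e‖ = 1) (y : E) (s : ℝ) :
    ‖y - s • e‖ ^ 2 = ‖y‖ ^ 2 - 2 * s * ⟪y, e⟫ + s ^ 2 := by
  rw [norm_sub_sq_real, norm_smul, inner_smul_right, he, mul_one, Real.norm_eq_abs, sq_abs]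
  ring

lemma exists_norm_eq_one_inner_eq_zero (hE : 1 < Module.finrank ℝ E) (e : E) :
    ∃ f : E, ‖f‖ = 1 ∧ ⟪f, e⟫ = 0 := by
  have hspan : (ℝ ∙ e) ≠ ⊤ := fun h => hE.not_ge <| by
    rw [← finrank_top ℝ E, ← h]
    simpa using finrank_span_le_card (R := ℝ) ({e} : Set E)
  obtain ⟨w, hw, hw₀⟩ := Submodule.exists_mem_ne_zero_of_ne_bot
    (mt (Submodule.orthogonal_eq_bot_iff (K := ℝ ∙ e)).1 hspan)
  refine ⟨NormedSpace.normalize w, NormedSpace.norm_normalize_eq_one_iff.2 hw₀, ?_⟩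
  exact Submodule.mem_orthogonal_singleton_iff_inner_left.1 (Submodule.smul_mem _ _ hw)

lemma exists_orthogonal_decomposition (hE : 1 < Module.finrank ℝ E) (he : ‖e‖ = 1) (y : E) :
    ∃ f : E, ‖f‖ = 1 ∧ ⟪f, e⟫ = 0 ∧ y = ⟪y, e⟫ • e + √(‖y‖ ^ 2 - ⟪y, e⟫ ^ 2) • f := by
  set w := y - ⟪y, e⟫ • e with hw
  have hwe : ⟪w, e⟫ = 0 := by
    simp [hw, inner_sub_left, inner_smul_left, he]
  have hnorm : √(‖y‖ ^ 2 - ⟪y, e⟫ ^ 2) = ‖w‖ := by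
    rw [← Real.sqrt_sq (norm_nonneg w), norm_sub_smul_sq he]
    congr 1
    ring
  rw [hnorm]
  rcases eq_or_ne w 0 with hw₀ | hw₀
  · obtain ⟨f, hf, hfe⟩ := exists_norm_eq_one_inner_eq_zero hE e
    exact ⟨f, hf, hfe, by simpa [hw₀] using sub_eq_zero.1 hw₀⟩
  · refine ⟨NormedSpace.normalize w, NormedSpace.norm_normalize_eq_one_iff.2 hw₀, ?_, ?_⟩
    · rw [NormedSpace.normalize, inner_smul_left, hwe, mul_zero]
    · rw [NormedSpace.norm_smul_normalize, hw, add_sub_cancel]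

lemma exists_spherical_arc (hE : 1 < Module.finrank ℝ E) (he : ‖e‖ = 1) (y : E) :
    ∃ γ : ℝ → E, Continuous γ ∧ γ ⟪y, e⟫ = y ∧ γ (-‖y‖) = (-‖y‖) • e ∧
      ∀ b ∈ Icc (-‖y‖) ‖y‖, ‖γ b‖ = ‖y‖ ∧ ⟪γ b, e⟫ = b := by
  obtain ⟨f, hf, hfe, hy⟩ := exists_orthogonal_decomposition hE he y
  have hef : ⟪e, f⟫ = 0 := by rw [real_inner_comm, hfe]
  refine ⟨fun b => b • e + √(‖y‖ ^ 2 - b ^ 2) • f, by fun_prop, hy.symm, by simp,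
    fun b hb => ⟨?_, ?_⟩⟩
  · have hsq : b ^ 2 ≤ ‖y‖ ^ 2 := sq_le_sq' hb.1 hb.2
    rw [← sq_eq_sq₀ (norm_nonneg _) (norm_nonneg _), norm_add_sq_real]
    simp [norm_smul, inner_smul_left, inner_smul_right, he, hf, hef, Real.sq_sqrt, hsq]
  · simp [inner_add_left, inner_smul_left, he, hfe]

/-- The eccentric annulus with axis a unit vector `e`: the ball of radius `R₁` about the origin
minus the closed ball of radius `R₀` about `s • e`, which may stick out of the outer ball. -/
def eccentricAnnulus (e : E) (R₀ R₁ s : ℝ) : Set E :=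
  ball 0 R₁ \ closedBall (s • e) R₀

lemma mem_eccentricAnnulus : y ∈ eccentricAnnulus e R₀ R₁ s ↔ ‖y‖ < R₁ ∧ R₀ < ‖y - s • e‖ := by
  simp [eccentricAnnulus, dist_eq_norm]

lemma isOpen_eccentricAnnulus : IsOpen (eccentricAnnulus e R₀ R₁ s) :=
  isOpen_ball.sdiff isClosed_closedBall

lemma isBounded_eccentricAnnulus : Bornology.IsBounded (eccentricAnnulus e R₀ R₁ s) :=
  isBounded_ball.subset sdiff_subset

lemma smul_mem_eccentricAnnulus_iff (he : ‖e‖ = 1) :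
    t • e ∈ eccentricAnnulus e R₀ R₁ s ↔ |t| < R₁ ∧ R₀ < |t - s| := by
  rw [mem_eccentricAnnulus, ← sub_smul, norm_smul, norm_smul, he, mul_one, mul_one,
    Real.norm_eq_abs, Real.norm_eq_abs]

lemma neg_smul_mem_eccentricAnnulus_iff (he : ‖e‖ = 1) (hs : 0 ≤ s) (ht : 0 ≤ t) :
    (-t) • e ∈ eccentricAnnulus e R₀ R₁ s ↔ t ∈ Ioo (R₀ - s) R₁ := by
  rw [smul_mem_eccentricAnnulus_iff he, abs_neg, abs_of_nonneg ht, abs_of_nonpos (by linarith),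
    neg_sub, sub_neg_eq_add, add_comm s, ← sub_lt_iff_lt_add, and_comm, mem_Ioo]

lemma nonempty_eccentricAnnulus (he : ‖e‖ = 1) (hR₀ : 0 ≤ R₀) (hR : R₀ < R₁) (hs : 0 ≤ s) :
    (eccentricAnnulus e R₀ R₁ s).Nonempty := by
  obtain ⟨t, ht₀, ht₁⟩ := exists_between hR
  exact ⟨_, (neg_smul_mem_eccentricAnnulus_iff he hs (hR₀.trans ht₀.le)).2 ⟨by linarith, ht₁⟩⟩

lemma mem_eccentricAnnulus_of_inner_le (he : ‖e‖ = 1) (hs : 0 ≤ s)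
    (hy : y ∈ eccentricAnnulus e R₀ R₁ s) (hnorm : ‖z‖ = ‖y‖) (hinner : ⟪z, e⟫ ≤ ⟪y, e⟫) :
    z ∈ eccentricAnnulus e R₀ R₁ s := by
  rw [mem_eccentricAnnulus] at hy ⊢
  refine ⟨hnorm.trans_lt hy.1, hy.2.trans_le ?_⟩
  rw [← sq_le_sq₀ (norm_nonneg _) (norm_nonneg _), norm_sub_smul_sq he, norm_sub_smul_sq he, hnorm]
  gcongr

-- Along the spherical arc from `y` to the half-axis opposite to the removed ball, the distance to
-- that ball does not decrease.
lemma exists_isPreconnected_subset_eccentricAnnulus (hE : 1 < Module.finrank ℝ E) (he : ‖e‖ = 1)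
    (hs : 0 ≤ s) (hy : y ∈ eccentricAnnulus e R₀ R₁ s) :
    ∃ A ⊆ eccentricAnnulus e R₀ R₁ s, IsPreconnected A ∧ y ∈ A ∧ (-‖y‖) • e ∈ A := by
  obtain ⟨γ, hγ, hγy, hγ_neg, hγ_mem⟩ := exists_spherical_arc hE he y
  obtain ⟨hlow, hhigh⟩ := abs_le.1 ((abs_real_inner_le_norm y e).trans_eq (by rw [he, mul_one]))
  refine ⟨γ '' Icc (-‖y‖) ⟪y, e⟫, ?_, isPreconnected_Icc.image _ hγ.continuousOn,
    ⟨_, right_mem_Icc.2 hlow, hγy⟩, ⟨_, left_mem_Icc.2 hlow, hγ_neg⟩⟩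
  rintro _ ⟨b, hb, rfl⟩
  obtain ⟨hnorm, hinner⟩ := hγ_mem b ⟨hb.1, hb.2.trans hhigh⟩
  exact mem_eccentricAnnulus_of_inner_le he hs hy hnorm (hinner.trans_le hb.2)

lemma isPreconnected_eccentricAnnulus (hE : 1 < Module.finrank ℝ E) (he : ‖e‖ = 1) (hs : 0 ≤ s) :
    IsPreconnected (eccentricAnnulus e R₀ R₁ s) := by
  set L : Set E := (fun t : ℝ => (-t) • e) '' (Ici 0 ∩ Ioo (R₀ - s) R₁)
  have hL : IsPreconnected L :=
    (ordConnected_Ici.inter ordConnected_Ioo).isPreconnected.image _ (by fun_prop)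
  have hL_sub : L ⊆ eccentricAnnulus e R₀ R₁ s := by
    rintro _ ⟨t, ht, rfl⟩
    exact (neg_smul_mem_eccentricAnnulus_iff he hs ht.1).2 ht.2
  have hmem_L : ∀ y : E, (-‖y‖) • e ∈ eccentricAnnulus e R₀ R₁ s → (-‖y‖) • e ∈ L := fun y hy =>
    ⟨‖y‖, ⟨norm_nonneg y, (neg_smul_mem_eccentricAnnulus_iff he hs (norm_nonneg y)).1 hy⟩, rfl⟩
  refine isPreconnected_of_forall_pair fun x hx y hy => ?_
  obtain ⟨A, hA_sub, hA, hxA, hxL⟩ := exists_isPreconnected_subset_eccentricAnnulus hE he hs hx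
  obtain ⟨B, hB_sub, hB, hyB, hyL⟩ := exists_isPreconnected_subset_eccentricAnnulus hE he hs hy
  exact ⟨A ∪ L ∪ B, union_subset (union_subset hA_sub hL_sub) hB_sub, .inl (.inl hxA), .inr hyB,
    (hA.union _ hxL (hmem_L x (hA_sub hxL)) hL).union _ (.inr (hmem_L y (hB_sub hyL))) hyL hB⟩

lemma eccentricAnnulus_subset (he : ‖e‖ = 1) (hR₀ : 0 ≤ R₀) (h₁ : √(R₁ ^ 2 - R₀ ^ 2) ≤ s₁)
    (h : s₁ ≤ s₂) : eccentricAnnulus e R₀ R₁ s₁ ⊆ eccentricAnnulus e R₀ R₁ s₂ := by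
  intro y hy
  rw [mem_eccentricAnnulus] at hy ⊢
  obtain ⟨hs₁, hsq⟩ := Real.sqrt_le_iff.1 h₁
  have hnorm : ‖y‖ ^ 2 < R₁ ^ 2 := pow_lt_pow_left₀ hy.1 (norm_nonneg _) two_ne_zero
  have hdist : R₀ ^ 2 < ‖y‖ ^ 2 - 2 * s₁ * ⟪y, e⟫ + s₁ ^ 2 :=
    norm_sub_smul_sq he y s₁ ▸ pow_lt_pow_left₀ hy.2 hR₀ two_ne_zero
  have hinner : ⟪y, e⟫ < s₁ := by nlinarith
  refine ⟨hy.1, lt_of_pow_lt_pow_left₀ 2 (norm_nonneg _) ?_⟩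
  rw [norm_sub_smul_sq he]
  nlinarith

lemma not_eccentricAnnulus_subset_closure (he : ‖e‖ = 1) (hR₀ : 0 < R₀) (hR : R₀ ≤ R₁)
    (hs₁ : 0 ≤ s₁) (h : s₁ < s₂) (h₁ : s₁ < R₁ + R₀) :
    ¬ eccentricAnnulus e R₀ R₁ s₂ ⊆ closure (eccentricAnnulus e R₀ R₁ s₁) := by
  obtain ⟨t, ht, ht'⟩ : ∃ t, s₁ - R₀ < t ∧ t < min (s₁ + R₀) (min (s₂ - R₀) R₁) :=
    exists_between (lt_min (by linarith) (lt_min (by linarith) (by linarith)))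
  obtain ⟨hts₁, hts₂, htR₁⟩ : t < s₁ + R₀ ∧ t < s₂ - R₀ ∧ t < R₁ := by
    simpa only [lt_min_iff] using ht'
  have hmem : t • e ∈ eccentricAnnulus e R₀ R₁ s₂ :=
    (smul_mem_eccentricAnnulus_iff he).2
      ⟨abs_lt.2 ⟨by linarith, htR₁⟩, lt_abs.2 (.inr (by linarith))⟩
  have hball : t • e ∈ ball (s₁ • e) R₀ := by
    rw [mem_ball_iff_norm, ← sub_smul, norm_smul, he, mul_one, Real.norm_eq_abs, abs_lt]
    constructor <;> linarith
  have hdisj : Disjoint (ball (s₁ • e) R₀) (closure (eccentricAnnulus e R₀ R₁ s₁)) :=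
    (disjoint_sdiff_right.mono_left ball_subset_closedBall).closure_right isOpen_ball
  exact fun hsub => hdisj.notMem_of_mem_left hball (hsub hmem)

theorem strictAntiOn_rayleighInf_eccentricAnnulus [FiniteDimensional ℝ E] [MeasurableSpace E]
    [BorelSpace E] {μ : Measure E} [μ.IsAddHaarMeasure] {p : ℝ} (hE : 1 < Module.finrank ℝ E)
    (he : ‖e‖ = 1) (hp : 1 < p) (hR₀ : 0 < R₀) (hR : R₀ < R₁) :
    StrictAntiOn (fun s => rayleighInf μ p (eccentricAnnulus e R₀ R₁ s))
      (Icc √(R₁ ^ 2 - R₀ ^ 2) (R₁ + R₀)) := by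
  intro s₁ h₁ s₂ h₂ h
  have hs₁ : 0 ≤ s₁ := (Real.sqrt_nonneg _).trans h₁.1
  exact rayleighInf_lt_rayleighInf hE hp isOpen_eccentricAnnulus isBounded_eccentricAnnulus
    (isPreconnected_eccentricAnnulus hE he (hs₁.trans h.le)) isOpen_eccentricAnnulus
    (nonempty_eccentricAnnulus he hR₀.le hR hs₁) (eccentricAnnulus_subset he hR₀.le h₁.1 h.le)
    (not_eccentricAnnulus_subset_closure he hR₀ hR.le hs₁ h (h.trans_le h₂.2))

end EccentricAnnulus

lemma norm_e1 {N : ℕ} (hN : N ≠ 0) : ‖e1 N‖ = 1 := by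
  have h : e1 N = EuclideanSpace.single (⟨0, Nat.pos_of_ne_zero hN⟩ : Fin N) (1 : ℝ) := by
    ext i
    simp [e1, Fin.ext_iff]
  rw [h, PiLp.norm_single, norm_one]

lemma Om_eq_eccentricAnnulus {N : ℕ} {R₀ : ℝ} (hR₀ : R₀ ≠ 0) (R₁ s : ℝ) :
    Om N R₀ R₁ s = eccentricAnnulus (e1 N) R₀ R₁ s := by
  rw [Om, eccentricAnnulus, closure_ball _ hR₀]

theorem stmt16 (N : ℕ) (hN : 2 ≤ N) (R₀ R₁ : ℝ) (hR₀ : 0 < R₀) (hR : R₀ < R₁)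
    (p : ℝ) (hp : 1 < p) (s₁ s₂ : ℝ)
    (h1 : Real.sqrt (R₁ ^ 2 - R₀ ^ 2) ≤ s₁) (h12 : s₁ < s₂) (h2 : s₂ ≤ R₁ + R₀) :
    Om N R₀ R₁ s₁ ⊂ Om N R₀ R₁ s₂ ∧
    lam1 p (Om N R₀ R₁ s₂) < lam1 p (Om N R₀ R₁ s₁) ∧
    StrictAntiOn (fun s : ℝ => lam1 p (Om N R₀ R₁ s))
      (Set.Icc (Real.sqrt (R₁ ^ 2 - R₀ ^ 2)) (R₁ + R₀)) := by
  have he : ‖e1 N‖ = 1 := norm_e1 (by omega)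
  have hfinrank : 1 < Module.finrank ℝ (EuclideanSpace ℝ (Fin N)) := by
    rwa [finrank_euclideanSpace_fin]
  have hanti : StrictAntiOn (fun s => lam1 p (Om N R₀ R₁ s))
      (Icc √(R₁ ^ 2 - R₀ ^ 2) (R₁ + R₀)) := by
    simp only [Om_eq_eccentricAnnulus hR₀.ne', lam1_eq_rayleighInf (zero_lt_one.trans hp).ne']
    exact strictAntiOn_rayleighInf_eccentricAnnulus hfinrank he hp hR₀ hR
  refine ⟨?_, hanti ⟨h1, h12.le.trans h2⟩ ⟨h1.trans h12.le, h2⟩ h12, hanti⟩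
  rw [Om_eq_eccentricAnnulus hR₀.ne', Om_eq_eccentricAnnulus hR₀.ne']
  exact ⟨eccentricAnnulus_subset he hR₀.le h1 h12.le, fun hsub =>
    not_eccentricAnnulus_subset_closure he hR₀ hR.le ((Real.sqrt_nonneg _).trans h1) h12
      (h12.trans_le h2) (hsub.trans subset_closure)⟩
end
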